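/- arXiv:2002.01181 — 14 statements merged into one kernel-verified Lean document; each statement's English description precedes it below -/
import Mathlib

section
/- Let λ ≥ 1 and let a₋, b₋ be real numbers with |b₋| < a₋. Set c₋ = (5/3)·a₋ − (2/3)·√(4·a₋² − 3·b₋²). Then −(a₋ + b₋/λ) < b₋ + c₋/λ < a₋ + b₋/λ. -/
/-!
Put `t = 1 / λ`, so `|t| ≤ 1`. Both inequalities say that an affine function of `t` is positive on
`[-1, 1]`, and at `t = ±1` they reduce to `2|b₋| - a₋ < c₋ < a₋`. By the formula for `c₋`, this is
`a₋ < √(4a₋² - 3b₋²) < 4a₋ - 3|b₋|`. The lower bound amounts to `b₋² < a₋²`, and the upper bound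
follows from `(4a₋ - 3|b₋|)² - (4a₋² - 3b₋²) = 12(a₋ - |b₋|)²`.
-/

section OrderedRing

variable {R : Type*} [CommRing R] [LinearOrder R] [IsStrictOrderedRing R] {a b c p q t : R}

lemma add_mul_pos_of_abs_lt_of_abs_le_one (hq : |q| < p) (ht : |t| ≤ 1) : 0 < p + t * q := by
  have htq : |t * q| < p := calc
    |t * q| = |t| * |q| := abs_mul t q
    _ ≤ |q| := mul_le_of_le_one_left (abs_nonneg q) ht
    _ < p := hq
  exact neg_lt_iff_pos_add'.mp (abs_lt.mp htq).1

lemma abs_add_mul_lt_add_mul (hbc : 2 * |b| - a < c) (hca : c < a) (ht : |t| ≤ 1) :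
    |b + t * c| < a + t * b := by
  have hb := le_abs_self b
  have hnb := neg_le_abs b
  have hsum : |b + c| < a + b := abs_lt.mpr ⟨by linarith, by linarith⟩
  have hdiff : |b - c| < a - b := abs_lt.mpr ⟨by linarith, by linarith⟩
  have hlower : 0 < a + b + t * (b + c) := add_mul_pos_of_abs_lt_of_abs_le_one hsum ht
  have hupper : 0 < a - b + t * (b - c) := add_mul_pos_of_abs_lt_of_abs_le_one hdiff ht
  exact abs_lt.mpr ⟨by linarith, by linarith⟩

end OrderedRing

section Sqrt

variable {a b k : ℝ}

lemma lt_sqrt_one_add_mul_sq_sub_mul_sq (hk : 0 < k) (hab : |b| < a) :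
    a < √((1 + k) * a ^ 2 - k * b ^ 2) := by
  have hsq : b ^ 2 < a ^ 2 := sq_lt_sq.mpr (hab.trans_le (le_abs_self a))
  apply Real.lt_sqrt_of_sq_lt
  linarith [mul_lt_mul_of_pos_left hsq hk]

lemma sqrt_one_add_mul_sq_sub_mul_sq_lt (hk : 0 < k) (hab : |b| < a) :
    √((1 + k) * a ^ 2 - k * b ^ 2) < (1 + k) * a - k * |b| := by
  have ha : 0 < a := (abs_nonneg b).trans_lt hab
  have : 0 < a - |b| := sub_pos.mpr hab
  have hpos : 0 < (1 + k) * a - k * |b| := calc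
    0 < a + k * (a - |b|) := by positivity
    _ = (1 + k) * a - k * |b| := by ring
  rw [Real.sqrt_lt' hpos, ← sub_pos]
  calc
    0 < k * (1 + k) * (a - |b|) ^ 2 := by positivity
    _ = ((1 + k) * a - k * |b|) ^ 2 - ((1 + k) * a ^ 2 - k * |b| ^ 2) := by ring
    _ = ((1 + k) * a - k * |b|) ^ 2 - ((1 + k) * a ^ 2 - k * b ^ 2) := by rw [sq_abs]

end Sqrt

theorem stmt_0_general (lam am bm cm : ℝ) (hlam : 1 ≤ |lam|) (hab : |bm| < am)
    (hcm : cm = 5 / 3 * am - 2 / 3 * Real.sqrt (4 * am ^ 2 - 3 * bm ^ 2)) :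
    |bm + cm / lam| < am + bm / lam := by
  have hfour : (1 + 3 : ℝ) = 4 := by norm_num
  have hlt := lt_sqrt_one_add_mul_sq_sub_mul_sq three_pos hab
  have hgt := sqrt_one_add_mul_sq_sub_mul_sq_lt three_pos hab
  rw [hfour] at hlt hgt
  have hca : cm < am := by linarith
  have hbc : 2 * |bm| - am < cm := by linarith
  have hinv : |lam⁻¹| ≤ 1 := abs_inv lam ▸ inv_le_one_of_one_le₀ hlam
  simpa only [div_eq_inv_mul] using abs_add_mul_lt_add_mul hbc hca hinv

/-- Lemma (Hilfssatz) 4.1 a): for `λ ≥ 1` and `|b₋| < a₋`, with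
`c₋ = (5/3)a₋ − (2/3)√(4a₋² − 3b₋²)`, one has
`−(a₋ + b₋/λ) < b₋ + c₋/λ < a₋ + b₋/λ`. -/
theorem stmt_0 (lam am bm cm : ℝ) (hlam : 1 ≤ lam) (hab : |bm| < am)
    (hcm : cm = 5 / 3 * am - 2 / 3 * Real.sqrt (4 * am ^ 2 - 3 * bm ^ 2)) :
    -(am + bm / lam) < bm + cm / lam ∧ bm + cm / lam < am + bm / lam :=
  abs_lt.mp (stmt_0_general lam am bm cm (hlam.trans (le_abs_self lam)) hab hcm)
end

section
/- Let λ ≥ 1 and let a₊, b₊ be real numbers with |b₊| < a₊. Set c₊ = (5/3)·a₊ − (2/3)·√(4·a₊² − 3·b₊²). Then −(a₊ − b₊/λ) < b₊ − c₊/λ < a₊ − b₊/λ. -/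
/-!
With `t = λ⁻¹`, the two inequalities read `t(b + c) < a + b` and `t(b - c) < a - b`, so for
`|t| ≤ 1` they follow from `|b + c| < a + b` and `|b - c| < a - b`. Together these two bounds mean
`2|b| - a < c < a`, which amounts to `a < √(4a² - 3b²) < 4a - 3|b|`. The right-hand inequality
holds because the squares of its two sides differ by `12(a - |b|)²`.
-/

section AbsSubMul

variable {R : Type*} [CommRing R] [LinearOrder R] [IsStrictOrderedRing R] {a b c t : R}

lemma mul_le_abs_of_abs_le_one (ht : |t| ≤ 1) (x : R) : t * x ≤ |x| :=
  calc
    t * x ≤ |t * x| := le_abs_self _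
    _ = |t| * |x| := abs_mul t x
    _ ≤ |x| := mul_le_of_le_one_left (abs_nonneg x) ht

lemma abs_sub_mul_lt_sub_mul (hadd : |b + c| < a + b) (hsub : |b - c| < a - b) (ht : |t| ≤ 1) :
    |b - t * c| < a - t * b := by
  have hlower : t * (b + c) < a + b := (mul_le_abs_of_abs_le_one ht _).trans_lt hadd
  have hupper : t * (b - c) < a - b := (mul_le_abs_of_abs_le_one ht _).trans_lt hsub
  rw [abs_lt]
  constructor <;> linarith

end AbsSubMul

section Sqrt

variable {a b : ℝ}

lemma lt_sqrt_four_mul_sq_sub_three_mul_sq (hab : |b| < a) : a < √(4 * a ^ 2 - 3 * b ^ 2) := by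
  have hsq : b ^ 2 < a ^ 2 := sq_lt_sq.mpr (hab.trans_le (le_abs_self a))
  exact Real.lt_sqrt_of_sq_lt (by linarith)

lemma sqrt_four_mul_sq_sub_three_mul_sq_lt (hab : |b| < a) :
    √(4 * a ^ 2 - 3 * b ^ 2) < 4 * a - 3 * |b| := by
  have hpos : 0 < 4 * a - 3 * |b| := by linarith [abs_nonneg b]
  have hgap : 0 < 12 * (a - |b|) ^ 2 :=
    mul_pos (by norm_num) (pow_pos (sub_pos.mpr hab) 2)
  rw [Real.sqrt_lt' hpos]
  calc
    4 * a ^ 2 - 3 * b ^ 2 = 4 * a ^ 2 - 3 * |b| ^ 2 := by rw [sq_abs]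
    _ < 4 * a ^ 2 - 3 * |b| ^ 2 + 12 * (a - |b|) ^ 2 := lt_add_of_pos_right _ hgap
    _ = (4 * a - 3 * |b|) ^ 2 := by ring

end Sqrt

theorem stmt_1_general (lam ap bp cp : ℝ) (hlam : 1 ≤ |lam|) (hab : |bp| < ap)
    (hcp : cp = 5 / 3 * ap - 2 / 3 * √(4 * ap ^ 2 - 3 * bp ^ 2)) :
    -(ap - bp / lam) < bp - cp / lam ∧ bp - cp / lam < ap - bp / lam := by
  have hupper : cp < ap := by linarith [lt_sqrt_four_mul_sq_sub_three_mul_sq hab]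
  have hlower : 2 * |bp| - ap < cp := by linarith [sqrt_four_mul_sq_sub_three_mul_sq_lt hab]
  have hadd : |bp + cp| < ap + bp := by
    rw [abs_lt]
    constructor <;> linarith [neg_abs_le bp]
  have hsub : |bp - cp| < ap - bp := by
    rw [abs_lt]
    constructor <;> linarith [le_abs_self bp]
  have hinv : |lam⁻¹| ≤ 1 := by
    rw [abs_inv]
    exact inv_le_one_of_one_le₀ hlam
  simpa only [abs_lt, inv_mul_eq_div] using abs_sub_mul_lt_sub_mul hadd hsub hinv

/-- Lemma (Hilfssatz) 4.1 b): for `λ ≥ 1` and `|b₊| < a₊`, with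
`c₊ = (5/3)a₊ − (2/3)√(4a₊² − 3b₊²)`, one has
`−(a₊ − b₊/λ) < b₊ − c₊/λ < a₊ − b₊/λ`. -/
theorem stmt_1 (lam ap bp cp : ℝ) (hlam : 1 ≤ lam) (hab : |bp| < ap)
    (hcp : cp = 5 / 3 * ap - 2 / 3 * Real.sqrt (4 * ap ^ 2 - 3 * bp ^ 2)) :
    -(ap - bp / lam) < bp - cp / lam ∧ bp - cp / lam < ap - bp / lam :=
  stmt_1_general lam ap bp cp (hlam.trans (le_abs_self lam)) hab hcp
end

section
/- Let a > 0, let 0 < η ≤ 1/3, and let ξ be a real number with −a(1+η) < ξ < a(1−η). Then 4a²(1+3η²) − 3ξ² > 0, and |(ξ + η·√(4a²(1+3η²) − 3ξ²)) / (1+3η²)| < a. -/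
/-!
Adjoin `√-n` to the real numbers and put `D = 1 + n η²`, the norm of `1 - √-n η`. The number
`z = s + √-n ξ`, where `s = √((n + 1) a² D - n ξ²)`, has norm `(n + 1) a² D`, so the quotient
`t + √-n x = z / (1 - √-n η)` has norm `t² + n x² = (n + 1) a²`, and its second coordinate `x` is
the number to be estimated. It follows that `|x| < a` as soon as `a < t`.

To bound `t` from below, put `u = ξ + a η`, so that the hypothesis on `ξ` is `|u| < a`. The product
`(a + √-n u) (1 - √-n η) = (a + n η u) + √-n ξ` has the same second coordinate as `z` but norm
`(a² + n u²) D < (n + 1) a² D`. Hence `a + n η u < s`, which is `a < t` after division by `D`.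
-/

lemma div_sq_add_mul_div_sq {K : Type*} [Field K] {n η ξ s : K} (hD : 1 + n * η ^ 2 ≠ 0) :
    ((s - n * η * ξ) / (1 + n * η ^ 2)) ^ 2 + n * ((ξ + η * s) / (1 + n * η ^ 2)) ^ 2 =
      (s ^ 2 + n * ξ ^ 2) / (1 + n * η ^ 2) := by
  have hnorm : (s - n * η * ξ) ^ 2 + n * (ξ + η * s) ^ 2 =
      (1 + n * η ^ 2) * (s ^ 2 + n * ξ ^ 2) := by
    simpa only [one_pow, one_mul] using
      (sq_add_mul_sq_mul_sq_add_mul_sq (x₁ := 1) (x₂ := η) (y₁ := s) (y₂ := ξ) (n := n)).symm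
  rw [div_pow, div_pow, ← mul_div_assoc, ← add_div, hnorm, sq (1 + n * η ^ 2),
    mul_div_mul_left _ _ hD]

section OrderedRing

variable {R : Type*} [CommRing R] [LinearOrder R] [IsStrictOrderedRing R] {n a η ξ t x : R}

lemma sq_lt_sub_mul_sq_of_abs_add_mul_lt (hn : 0 < n) (hξ : |ξ + a * η| < a) :
    (a + n * η * (ξ + a * η)) ^ 2 < (n + 1) * a ^ 2 * (1 + n * η ^ 2) - n * ξ ^ 2 := by
  have hsq : 0 < a ^ 2 - (ξ + a * η) ^ 2 :=
    sub_pos.mpr (sq_lt_sq.mpr (hξ.trans_le (le_abs_self a)))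
  rw [← sub_pos]
  calc
    0 < n * (1 + n * η ^ 2) * (a ^ 2 - (ξ + a * η) ^ 2) := by positivity
    _ = (n + 1) * a ^ 2 * (1 + n * η ^ 2) - n * ξ ^ 2 - (a + n * η * (ξ + a * η)) ^ 2 := by ring

lemma abs_lt_of_sq_add_mul_sq_eq (hn : 0 < n) (ha : 0 ≤ a)
    (h : t ^ 2 + n * x ^ 2 = (n + 1) * a ^ 2) (hat : a < t) : |x| < a := by
  have hsq : a ^ 2 < t ^ 2 := by gcongr
  have hmul : n * x ^ 2 < n * a ^ 2 := by linarith
  exact abs_lt_of_sq_lt_sq (lt_of_mul_lt_mul_left hmul hn.le) ha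

end OrderedRing

theorem stmt_2_general {n a η ξ : ℝ} (hn : 0 < n) (hξ : |ξ + a * η| < a) :
    0 < (n + 1) * a ^ 2 * (1 + n * η ^ 2) - n * ξ ^ 2 ∧
    |(ξ + η * √((n + 1) * a ^ 2 * (1 + n * η ^ 2) - n * ξ ^ 2)) / (1 + n * η ^ 2)| < a := by
  have hlt := sq_lt_sub_mul_sq_of_abs_add_mul_lt hn hξ
  have hpos := (sq_nonneg _).trans_lt hlt
  have hD : 0 < 1 + n * η ^ 2 := by positivity
  have hs := Real.sq_sqrt hpos.le
  set s := √((n + 1) * a ^ 2 * (1 + n * η ^ 2) - n * ξ ^ 2)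
  have hnorm : ((s - n * η * ξ) / (1 + n * η ^ 2)) ^ 2 +
      n * ((ξ + η * s) / (1 + n * η ^ 2)) ^ 2 = (n + 1) * a ^ 2 := by
    rw [div_sq_add_mul_div_sq hD.ne', hs, sub_add_cancel, mul_div_cancel_right₀ _ hD.ne']
  have hat : a < (s - n * η * ξ) / (1 + n * η ^ 2) := by
    rw [lt_div_iff₀ hD]
    linarith [Real.lt_sqrt_of_sq_lt hlt]
  exact ⟨hpos, abs_lt_of_sq_add_mul_sq_eq hn ((abs_nonneg _).trans hξ.le) hnorm hat⟩

/-- Lemma (Hilfssatz) 4.2: for `a > 0`, `0 < η ≤ 1/3` and `−a(1+η) < ξ < a(1−η)`,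
one has `4a²(1+3η²) − 3ξ² > 0` and `|(ξ + η√(4a²(1+3η²) − 3ξ²))/(1+3η²)| < a`. -/
theorem stmt_2 (a η ξ : ℝ) (ha : 0 < a) (hη : 0 < η) (hη' : η ≤ 1 / 3)
    (hξ₁ : -(a * (1 + η)) < ξ) (hξ₂ : ξ < a * (1 - η)) :
    0 < 4 * a ^ 2 * (1 + 3 * η ^ 2) - 3 * ξ ^ 2 ∧
    |(ξ + η * Real.sqrt (4 * a ^ 2 * (1 + 3 * η ^ 2) - 3 * ξ ^ 2)) / (1 + 3 * η ^ 2)| < a := by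
  have hξ : |ξ + a * η| < a := abs_lt.mpr ⟨by linarith, by linarith⟩
  simpa only [three_add_one_eq_four] using stmt_2_general three_pos hξ
end

section
/- Let a > 0 and 0 < η ≤ 1/3. Then the function B(ξ) = ξ + η·√(4a²(1+3η²) − 3ξ²) is strictly monotonically increasing on the open interval (−a(1+η), a(1−η)). -/
/-!
For `B(ξ) = ξ + η√(c − mξ²)` the condition `B' > 0` reads `mηξ < √(c − mξ²)`. Adding it at two
points `x < y`, and writing the difference of the square roots as `m(y² − x²)` over their sum,
gives `B(x) < B(y)` without differentiating. For `c = k(1 + mη²)` the condition follows from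
`mξ² < k`, since after squaring the factor `1 + mη²` cancels; here this is `3ξ² < 4a²`. The
interval `(−a(1+η), a(1−η))` is `|ξ + aη| < a`. On it either `ηξ < 0`, and the condition is
clear, or `ξ² ≤ (ξ + aη)² < a²`.
-/

theorem strictMonoOn_add_mul_sqrt_sub_mul_sq {c m η : ℝ} {S : Set ℝ}
    (h_nonneg : ∀ ξ ∈ S, 0 ≤ c - m * ξ ^ 2)
    (h_lt : ∀ ξ ∈ S, m * η * ξ < √(c - m * ξ ^ 2)) :
    StrictMonoOn (fun ξ ↦ ξ + η * √(c - m * ξ ^ 2)) S := by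
  intro x hx y hy hxy
  have sq_x := Real.sq_sqrt (h_nonneg x hx)
  have sq_y := Real.sq_sqrt (h_nonneg y hy)
  have slope_lt := add_lt_add (h_lt x hx) (h_lt y hy)
  have sqrt_x_nonneg := Real.sqrt_nonneg (c - m * x ^ 2)
  have sqrt_y_nonneg := Real.sqrt_nonneg (c - m * y ^ 2)
  dsimp only
  set s := √(c - m * x ^ 2)
  set t := √(c - m * y ^ 2)
  suffices η * (s - t) < y - x by linarith
  rcases (add_nonneg sqrt_x_nonneg sqrt_y_nonneg).eq_or_lt with sum_zero | sum_pos
  · have s_eq_t : s = t := by linarith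
    simpa [s_eq_t] using hxy
  · refine lt_of_mul_lt_mul_right ?_ sum_pos.le
    calc η * (s - t) * (s + t)
        = (y - x) * (m * η * x + m * η * y) := by linear_combination η * sq_x - η * sq_y
      _ < (y - x) * (s + t) := mul_lt_mul_of_pos_left slope_lt (sub_pos.2 hxy)

theorem mul_mul_lt_sqrt_of_mul_sq_lt {k m η ξ : ℝ} (hm : 0 ≤ m) (h : m * ξ ^ 2 < k) :
    m * η * ξ < √(k * (1 + m * η ^ 2) - m * ξ ^ 2) := by
  apply Real.lt_sqrt_of_sq_lt
  have factor_pos : 0 < 1 + m * η ^ 2 := by positivity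
  linarith [mul_lt_mul_of_pos_right h factor_pos]

theorem radicand_pos_of_abs_add_mul_lt {a η ξ : ℝ} (h : |ξ + a * η| < a) :
    0 < 4 * a ^ 2 * (1 + 3 * η ^ 2) - 3 * ξ ^ 2 := by
  have sq_lt : (ξ + a * η) ^ 2 < a ^ 2 := sq_lt_sq.2 (h.trans_le (le_abs_self a))
  calc 0 < 4 * (a ^ 2 - (ξ + a * η) ^ 2) + (ξ + 4 * a * η) ^ 2 := by
        linarith [sq_nonneg (ξ + 4 * a * η)]
    _ = 4 * a ^ 2 * (1 + 3 * η ^ 2) - 3 * ξ ^ 2 := by ring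

theorem three_mul_mul_lt_sqrt_of_abs_add_mul_lt {a η ξ : ℝ} (h : |ξ + a * η| < a) :
    3 * η * ξ < √(4 * a ^ 2 * (1 + 3 * η ^ 2) - 3 * ξ ^ 2) := by
  rcases lt_or_ge (η * ξ) 0 with opposite_signs | same_signs
  · linarith [Real.sqrt_nonneg (4 * a ^ 2 * (1 + 3 * η ^ 2) - 3 * ξ ^ 2)]
  · have a_pos : 0 < a := (abs_nonneg _).trans_lt h
    have sq_lt : ξ ^ 2 < a ^ 2 := calc
      ξ ^ 2 ≤ ξ ^ 2 + (2 * a * (η * ξ) + (a * η) ^ 2) := le_add_of_nonneg_right (by positivity)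
      _ = (ξ + a * η) ^ 2 := by ring
      _ < a ^ 2 := sq_lt_sq.2 (h.trans_le (le_abs_self a))
    exact mul_mul_lt_sqrt_of_mul_sq_lt zero_le_three (by linarith [sq_nonneg a])

theorem stmt_4_general (a η : ℝ) :
    StrictMonoOn (fun ξ : ℝ => ξ + η * √(4 * a ^ 2 * (1 + 3 * η ^ 2) - 3 * ξ ^ 2))
      (Set.Ioo (-(a * (1 + η))) (a * (1 - η))) := by
  have abs_lt_of_mem : ∀ ξ ∈ Set.Ioo (-(a * (1 + η))) (a * (1 - η)), |ξ + a * η| < a :=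
    fun ξ hξ ↦ abs_lt.2 ⟨by linarith [hξ.1], by linarith [hξ.2]⟩
  exact strictMonoOn_add_mul_sqrt_sub_mul_sq
    (fun ξ hξ ↦ (radicand_pos_of_abs_add_mul_lt (abs_lt_of_mem ξ hξ)).le)
    (fun ξ hξ ↦ three_mul_mul_lt_sqrt_of_abs_add_mul_lt (abs_lt_of_mem ξ hξ))

/-- The function `B(ξ) = ξ + η√(4a²(1+3η²) − 3ξ²)` is strictly monotonically
increasing on the open interval `(−a(1+η), a(1−η))`, for `a > 0` and `0 < η ≤ 1/3`. -/
theorem stmt_4 (a η : ℝ) (ha : 0 < a) (hη : 0 < η) (hη' : η ≤ 1 / 3) :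
    StrictMonoOn (fun ξ : ℝ => ξ + η * Real.sqrt (4 * a ^ 2 * (1 + 3 * η ^ 2) - 3 * ξ ^ 2))
      (Set.Ioo (-(a * (1 + η))) (a * (1 - η))) :=
  stmt_4_general a η
end

section
/- Let x̄ ≥ 0, Δx > 0, λ ≥ 1 be real numbers, and let a₋, b₋, a₊, b₊ be real numbers with |b₋| < a₋ and |b₊| < a₊. Set c₋ = c(a₋,b₋), c₊ = c(a₊,b₊), q = 2·x̄·Δx / (x̄² + (Δx)²/3), a' = (1/2)(a₋ + b₋/λ)(1 − q/2) + (1/2)(a₊ − b₊/λ)(1 + q/2), η = q/(6λ), ξ = (1/2)(b₋ + c₋/λ)(1 − q/2) + (1/2)(b₊ − c₊/λ)(1 + q/2) − a'·q/(6λ), and b' = (ξ + η·√(4·a'²·(1+3η²) − 3ξ²)) / (1+3η²). Then |b'| < a'. -/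
/-!
Call a pair `(x, y)` with `|y| < x` subluminal; such pairs form a convex cone. For a subluminal
state `(a, b)` the pairs `(a ± b, b ± c)` are subluminal, hence so is `(a + b * l, b + c * l)` for
`|l| ≤ 1`, and so is the average `(a', ξ + η * a')` of two such pairs with weights `1/2 ∓ q/4`.

It remains to see that the source term preserves the cone. The new momentum `b'` solves
`b = ξ + η * √(4 * a' ^ 2 - 3 * b ^ 2)`, so it is a root of
`(1 + 3 * η ^ 2) * t ^ 2 - 2 * ξ * t + ξ ^ 2 - 4 * η ^ 2 * a' ^ 2`, whose value at `t = a'` is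
`(a' - ξ) ^ 2 - (η * a') ^ 2`. If `0 ≤ η`, then `b'` is the larger root, and `a'` lies to the right
of the vertex with a positive value there. If `η < 0`, then `b'` is the smaller root, and either
the vertex lies to the left of `a'` or the value at `a'` is negative. In all cases `b' < a'`, and
`-a' < b'` follows because changing the signs of `ξ` and `η` changes the sign of `b'`.
-/

lemma abs_convex_combination_lt {x₁ y₁ x₂ y₂ w₁ w₂ : ℝ} (h₁ : |y₁| < x₁) (h₂ : |y₂| < x₂)
    (hw₁ : 0 ≤ w₁) (hw₂ : 0 ≤ w₂) (hw : w₁ + w₂ = 1) :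
    |w₁ * y₁ + w₂ * y₂| < w₁ * x₁ + w₂ * x₂ :=
  ((convexOn_univ_norm (E := ℝ)).convex_strict_epigraph (x := (y₁, x₁)) ⟨trivial, h₁⟩
    (y := (y₂, x₂)) ⟨trivial, h₂⟩ hw₁ hw₂ hw).2

/-- The momentum flux `c(a, b)` of the ultra-relativistic Euler equations in a state with energy
density `a` and momentum density `b`. -/
noncomputable def momentumFlux (a b : ℝ) : ℝ :=
  5 / 3 * a - 2 / 3 * √(4 * a ^ 2 - 3 * b ^ 2)

lemma momentumFlux_neg (a b : ℝ) : momentumFlux a (-b) = momentumFlux a b := by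
  simp only [momentumFlux, neg_sq]

lemma momentumFlux_lt {a b : ℝ} (h : |b| < a) : momentumFlux a b < a := by
  have hsq : b ^ 2 < a ^ 2 := sq_lt_sq.mpr (h.trans_le (le_abs_self a))
  have : a < √(4 * a ^ 2 - 3 * b ^ 2) := Real.lt_sqrt_of_sq_lt (by linarith)
  unfold momentumFlux
  linarith

lemma neg_lt_momentumFlux {a b : ℝ} (h : |b| < a) : -(a + 2 * b) < momentumFlux a b := by
  obtain ⟨hneg, hpos⟩ := abs_lt.mp h
  have hsq : 0 < (a + b) ^ 2 := pow_pos (by linarith) 2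
  have : √(4 * a ^ 2 - 3 * b ^ 2) < 4 * a + 3 * b := by
    rw [Real.sqrt_lt' (by linarith)]
    linarith
  unfold momentumFlux
  linarith

lemma abs_add_momentumFlux_lt {a b : ℝ} (h : |b| < a) : |b + momentumFlux a b| < a + b :=
  abs_lt.mpr ⟨by linarith [neg_lt_momentumFlux h], by linarith [momentumFlux_lt h]⟩

lemma abs_sub_momentumFlux_lt {a b : ℝ} (h : |b| < a) : |b - momentumFlux a b| < a - b := by
  have := abs_add_momentumFlux_lt ((abs_neg b).trans_lt h)
  rwa [momentumFlux_neg, neg_add_eq_sub, abs_sub_comm, ← sub_eq_add_neg] at this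

lemma abs_add_momentumFlux_mul_lt {a b l : ℝ} (h : |b| < a) (hl : |l| ≤ 1) :
    |b + momentumFlux a b * l| < a + b * l := by
  obtain ⟨hl₁, hl₂⟩ := abs_le.mp hl
  convert abs_convex_combination_lt (abs_add_momentumFlux_lt h) (abs_sub_momentumFlux_lt h)
    (w₁ := (1 + l) / 2) (w₂ := (1 - l) / 2) (by linarith) (by linarith) (by ring) using 1
  · congr 1; ring
  · ring

/-- The momentum density after the implicit source step of the scheme: the solution
`b = ξ + η * √(4 * a ^ 2 - 3 * b ^ 2)` given by the quadratic formula, where `a` is the updated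
energy density. -/
noncomputable def momentumUpdate (a ξ η : ℝ) : ℝ :=
  (ξ + η * √(4 * a ^ 2 * (1 + 3 * η ^ 2) - 3 * ξ ^ 2)) / (1 + 3 * η ^ 2)

lemma momentumUpdate_neg_neg (a ξ η : ℝ) :
    momentumUpdate a (-ξ) (-η) = -momentumUpdate a ξ η := by
  simp only [momentumUpdate, neg_sq]
  ring

lemma momentumUpdate_discrim_nonneg {a ξ η : ℝ} (h : |ξ + η * a| < a) :
    0 ≤ 4 * a ^ 2 * (1 + 3 * η ^ 2) - 3 * ξ ^ 2 := by
  have hsq : (ξ + η * a) ^ 2 < a ^ 2 := sq_lt_sq.mpr (h.trans_le (le_abs_self a))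
  calc 0 ≤ (ξ + 4 * η * a) ^ 2 + 4 * (a ^ 2 - (ξ + η * a) ^ 2) := by nlinarith
    _ = 4 * a ^ 2 * (1 + 3 * η ^ 2) - 3 * ξ ^ 2 := by ring

lemma momentumUpdate_lt {a ξ η : ℝ} (h : |ξ + η * a| < a) : momentumUpdate a ξ η < a := by
  have ha : 0 < a := (abs_nonneg _).trans_lt h
  have hK : 0 < 1 + 3 * η ^ 2 := by positivity
  rw [momentumUpdate, div_lt_iff₀ hK, ← lt_sub_iff_add_lt']
  set K := 1 + 3 * η ^ 2 with hK_def
  set S := √(4 * a ^ 2 * K - 3 * ξ ^ 2)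
  have hS : 0 ≤ S := Real.sqrt_nonneg _
  have hKa : a ≤ a * K := le_mul_of_one_le_right ha.le (by rw [hK_def]; nlinarith)
  have quadratic_at_a : (a * K - ξ) ^ 2 - (η * S) ^ 2 = K * ((a - ξ) ^ 2 - (η * a) ^ 2) := by
    rw [mul_pow η S, Real.sq_sqrt (momentumUpdate_discrim_nonneg h)]
    ring
  have hlt : ξ + η * a < a := (abs_lt.mp h).2
  rcases le_total 0 η with hη | hη
  · have hηa : 0 ≤ η * a := mul_nonneg hη ha.le
    have hsq : (η * a) ^ 2 < (a - ξ) ^ 2 := pow_lt_pow_left₀ (by linarith) hηa two_ne_zero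
    have : 0 < K * ((a - ξ) ^ 2 - (η * a) ^ 2) := mul_pos hK (sub_pos.mpr hsq)
    exact lt_of_pow_lt_pow_left₀ 2 (by linarith) (by linarith)
  · by_contra! hcon
    have hηS : η * S ≤ 0 := mul_nonpos_of_nonpos_of_nonneg hη hS
    have hsq : (a - ξ) ^ 2 < (η * a) ^ 2 :=
      neg_sq (η * a) ▸ sq_lt_sq' (by linarith) (by linarith)
    have hsq_le : (η * S) ^ 2 ≤ (a * K - ξ) ^ 2 := sq_le_sq.mpr (abs_le_abs_of_nonpos hηS hcon)
    have : K * ((a - ξ) ^ 2 - (η * a) ^ 2) < 0 := mul_neg_of_pos_of_neg hK (sub_neg.mpr hsq)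
    linarith

lemma abs_momentumUpdate_lt {a ξ η : ℝ} (h : |ξ + η * a| < a) : |momentumUpdate a ξ η| < a := by
  have h_neg : |-ξ + -η * a| < a := by rwa [neg_mul, ← neg_add, abs_neg]
  have h_neg_lt : -momentumUpdate a ξ η < a :=
    momentumUpdate_neg_neg a ξ η ▸ momentumUpdate_lt h_neg
  exact abs_lt.mpr ⟨neg_lt.mp h_neg_lt, momentumUpdate_lt h⟩

lemma abs_two_mul_mul_div_le_two (x y : ℝ) : |2 * x * y / (x ^ 2 + y ^ 2 / 3)| ≤ 2 := by
  have hden : 0 ≤ x ^ 2 + y ^ 2 / 3 := by positivity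
  rw [abs_div, abs_of_nonneg hden]
  refine div_le_of_le_mul₀ hden zero_le_two (abs_le.mpr ⟨?_, ?_⟩)
  · nlinarith [sq_nonneg (2 * x + y), sq_nonneg y]
  · nlinarith [sq_nonneg (2 * x - y), sq_nonneg y]

theorem stmt_5_general {lam am bm ap bp cm cp q a' η ξ b' : ℝ}
    (hq : |q| ≤ 2) (hlam : 1 ≤ |lam|) (hm : |bm| < am) (hp : |bp| < ap)
    (hcm : cm = momentumFlux am bm) (hcp : cp = momentumFlux ap bp)
    (ha' : a' = 1 / 2 * (am + bm / lam) * (1 - q / 2) + 1 / 2 * (ap - bp / lam) * (1 + q / 2))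
    (hη : η = q / (6 * lam))
    (hξ : ξ = 1 / 2 * (bm + cm / lam) * (1 - q / 2) + 1 / 2 * (bp - cp / lam) * (1 + q / 2)
      - a' * q / (6 * lam))
    (hb' : b' = momentumUpdate a' ξ η) :
    |b'| < a' := by
  have hl : |lam⁻¹| ≤ 1 := abs_inv lam ▸ inv_le_one_of_one_le₀ hlam
  have h_left : |bm + cm * lam⁻¹| < am + bm * lam⁻¹ := hcm ▸ abs_add_momentumFlux_mul_lt hm hl
  have h_right : |bp + cp * -lam⁻¹| < ap + bp * -lam⁻¹ :=
    hcp ▸ abs_add_momentumFlux_mul_lt hp ((abs_neg _).trans_le hl)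
  obtain ⟨hq₁, hq₂⟩ := abs_le.mp hq
  have h_average := abs_convex_combination_lt h_left h_right
    (w₁ := 1 / 2 * (1 - q / 2)) (w₂ := 1 / 2 * (1 + q / 2))
    (by linarith) (by linarith) (by ring)
  rw [hb']
  apply abs_momentumUpdate_lt
  convert h_average using 1
  · rw [hξ, hη]; congr 1; ring
  · rw [ha']; ring

/-- Theorem 4.3: stability of the scheme update `Euler`. Given `x̄ ≥ 0`, `Δx > 0`,
`λ ≥ 1` and states with `|b₋| < a₋`, `|b₊| < a₊`, the updated state `(a',b')` of the
staggered-grid scheme satisfies `|b'| < a'`. -/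
theorem stmt_5 (xbar Δx lam am bm ap bp cm cp q a' η ξ b' : ℝ)
    (hxbar : 0 ≤ xbar) (hΔx : 0 < Δx) (hlam : 1 ≤ lam)
    (hm : |bm| < am) (hp : |bp| < ap)
    (hcm : cm = 5 / 3 * am - 2 / 3 * Real.sqrt (4 * am ^ 2 - 3 * bm ^ 2))
    (hcp : cp = 5 / 3 * ap - 2 / 3 * Real.sqrt (4 * ap ^ 2 - 3 * bp ^ 2))
    (hq : q = 2 * xbar * Δx / (xbar ^ 2 + Δx ^ 2 / 3))
    (ha' : a' = 1 / 2 * (am + bm / lam) * (1 - q / 2) + 1 / 2 * (ap - bp / lam) * (1 + q / 2))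
    (hη : η = q / (6 * lam))
    (hξ : ξ = 1 / 2 * (bm + cm / lam) * (1 - q / 2) + 1 / 2 * (bp - cp / lam) * (1 + q / 2)
      - a' * q / (6 * lam))
    (hb' : b' = (ξ + η * Real.sqrt (4 * a' ^ 2 * (1 + 3 * η ^ 2) - 3 * ξ ^ 2)) / (1 + 3 * η ^ 2)) :
    |b'| < a' :=
  stmt_5_general (hq ▸ abs_two_mul_mul_div_le_two xbar Δx) (hlam.trans (le_abs_self lam))
    hm hp hcm hcp ha' hη hξ hb'
end

section
/- Let a > 0, x̄ ≥ 0, Δx > 0 and λ ≥ 1. Then the scheme update preserves the constant rest state: Euler(a, 0, a, 0, x̄, Δx, λ) = (a, 0), i.e. with a₋ = a₊ = a and b₋ = b₊ = 0 one obtains a' = a and b' = 0. -/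
/-- The radially weighted Lax–Friedrichs average of a density `x` with flux `f`. The subscripts `m`
and `p` stand for the left and right states, `r = 1 / λ` is the mesh ratio, and `q` is the
geometric weight. -/
noncomputable def laxFriedrichsAverage (q r xm fm xp fp : ℝ) : ℝ :=
  1 / 2 * (xm + fm * r) * (1 - q / 2) + 1 / 2 * (xp - fp * r) * (1 + q / 2)

/-- The closed form of a solution `b` of `b = ξ + η √(4a² - 3b²)`, used for the momentum update
with an implicit pressure source. -/
noncomputable def implicitMomentum (η a ξ : ℝ) : ℝ :=
  (ξ + η * √(4 * a ^ 2 * (1 + 3 * η ^ 2) - 3 * ξ ^ 2)) / (1 + 3 * η ^ 2)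

/-- One step of the scheme `Euler` from the left state `u` and the right state `v`, each a pair
`(a, b)`. The parameters are the geometric weight `q` and the mesh ratio `r = 1 / λ`, so that
`η = q / 6 * r`. -/
noncomputable def eulerStep (q r : ℝ) (u v : ℝ × ℝ) : ℝ × ℝ :=
  let a' := laxFriedrichsAverage q r u.1 u.2 v.1 v.2
  let ξ := laxFriedrichsAverage q r u.2 (momentumFlux u.1 u.2) v.2 (momentumFlux v.1 v.2)
    - a' * (q / 6 * r)
  (a', implicitMomentum (q / 6 * r) a' ξ)

lemma sqrt_four_mul_sq {a : ℝ} (ha : 0 ≤ a) : √(4 * a ^ 2) = 2 * a := by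
  rw [show 4 * a ^ 2 = (2 * a) ^ 2 by ring, Real.sqrt_sq (by positivity)]

lemma momentumFlux_zero_right {a : ℝ} (ha : 0 ≤ a) : momentumFlux a 0 = a / 3 := by
  rw [momentumFlux, zero_pow two_ne_zero, mul_zero, sub_zero, sqrt_four_mul_sq ha]
  ring

lemma laxFriedrichsAverage_self (q r x f : ℝ) :
    laxFriedrichsAverage q r x f x f = x - q / 2 * (f * r) := by
  unfold laxFriedrichsAverage
  ring

/-- Squaring the implicit relation gives a quadratic equation for `b`; the sign condition selects
the root given by the closed form. -/
lemma implicitMomentum_eq_of_eq_add {η a ξ b : ℝ} (hb : 3 * b ^ 2 ≤ 4 * a ^ 2)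
    (hroot : 0 ≤ √(4 * a ^ 2 - 3 * b ^ 2) + 3 * η * b)
    (himplicit : b = ξ + η * √(4 * a ^ 2 - 3 * b ^ 2)) :
    implicitMomentum η a ξ = b := by
  have hsq : √(4 * a ^ 2 - 3 * b ^ 2) ^ 2 = 4 * a ^ 2 - 3 * b ^ 2 := Real.sq_sqrt (by linarith)
  set s := √(4 * a ^ 2 - 3 * b ^ 2)
  obtain rfl : ξ = b - η * s := by linarith
  have hdiscrim :
      4 * a ^ 2 * (1 + 3 * η ^ 2) - 3 * (b - η * s) ^ 2 = (s + 3 * η * b) ^ 2 := by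
    linear_combination (-1 - 3 * η ^ 2) * hsq
  rw [implicitMomentum, hdiscrim, Real.sqrt_sq hroot, div_eq_iff (by positivity)]
  ring

lemma implicitMomentum_neg_two_mul {a : ℝ} (η : ℝ) (ha : 0 ≤ a) :
    implicitMomentum η a (-(2 * a * η)) = 0 := by
  apply implicitMomentum_eq_of_eq_add
  · rw [zero_pow two_ne_zero, mul_zero]
    positivity
  · simp
  · rw [zero_pow two_ne_zero, mul_zero, sub_zero, sqrt_four_mul_sq ha]
    ring

theorem stmt_7_general {a : ℝ} (q r : ℝ) (ha : 0 ≤ a) :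
    eulerStep q r (a, 0) (a, 0) = (a, 0) := by
  have henergy : laxFriedrichsAverage q r a 0 a 0 = a := by simp [laxFriedrichsAverage_self]
  have hsource : laxFriedrichsAverage q r 0 (momentumFlux a 0) 0 (momentumFlux a 0)
      - a * (q / 6 * r) = -(2 * a * (q / 6 * r)) := by
    rw [laxFriedrichsAverage_self, momentumFlux_zero_right ha]
    ring
  simp only [eulerStep, henergy, hsource, implicitMomentum_neg_two_mul _ ha]

/-- The scheme update preserves the constant rest state: with `a₋ = a₊ = a > 0` and
`b₋ = b₊ = 0` one obtains `a' = a` and `b' = 0`, i.e.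
`Euler(a, 0, a, 0, x̄, Δx, λ) = (a, 0)`. -/
theorem stmt_7 (a xbar Δx lam : ℝ) (ha : 0 < a)
    (hxbar : 0 ≤ xbar) (hΔx : 0 < Δx) (hlam : 1 ≤ lam)
    (am bm ap bp cm cp q a' η ξ b' : ℝ)
    (ham : am = a) (hbm : bm = 0) (hap : ap = a) (hbp : bp = 0)
    (hcm : cm = 5 / 3 * am - 2 / 3 * Real.sqrt (4 * am ^ 2 - 3 * bm ^ 2))
    (hcp : cp = 5 / 3 * ap - 2 / 3 * Real.sqrt (4 * ap ^ 2 - 3 * bp ^ 2))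
    (hq : q = 2 * xbar * Δx / (xbar ^ 2 + Δx ^ 2 / 3))
    (ha' : a' = 1 / 2 * (am + bm / lam) * (1 - q / 2) + 1 / 2 * (ap - bp / lam) * (1 + q / 2))
    (hη : η = q / (6 * lam))
    (hξ : ξ = 1 / 2 * (bm + cm / lam) * (1 - q / 2) + 1 / 2 * (bp - cp / lam) * (1 + q / 2)
      - a' * q / (6 * lam))
    (hb' : b' = (ξ + η * Real.sqrt (4 * a' ^ 2 * (1 + 3 * η ^ 2) - 3 * ξ ^ 2)) / (1 + 3 * η ^ 2)) :
    a' = a ∧ b' = 0 := by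
  rw [mul_div_assoc, ← hη] at hξ
  rw [← div_div, div_eq_mul_inv] at hη
  subst am bm ap bp cm cp η ξ b' a'
  exact Prod.mk.inj (stmt_7_general q lam⁻¹ ha.le)
end

section
/- Let a₀, b₀ : ℝ → ℝ be C¹ functions with a₀ even and b₀ odd, let A₀(x) = ∫₀ˣ u·a₀(u) du and B₀(x) = ∫₀ˣ b₀(u) du, and let a(t,x), b(t,x) be given by the explicit solution formulas of the linearized radially symmetric system. Then for every T > 0 and X > 0, the functions (t,x) ↦ x·a(t,x) and (t,x) ↦ x·b(t,x) are bounded on (0,T) × (0,X). -/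
/-!
The primitive of an odd function `f` is even, so its increment from `x - r` to `x + r` is
`∫ u in (r - x)..(r + x), f u`, an integral over an interval centred at `r`. Rescaling that
interval to `[-1, 1]` pulls out a factor `x`, which cancels the extra `1 / x` in front of `A₀` and
`B₀` in the formula for `b`. Hence `x * a` and `x * b` extend continuously across `x = 0` to the
whole plane, and are bounded on bounded boxes by compactness.
-/

section CenteredIntegral

variable {E : Type*} [NormedAddCommGroup E] [NormedSpace ℝ E] {f : ℝ → E}

/-- The integral of `f` over `[r - x, r + x]`, rescaled to `[-1, 1]`: for `x ≠ 0` this is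
`x⁻¹ • ∫ u in (r - x)..(r + x), f u`, and it keeps a meaningful value at `x = 0`. -/
noncomputable def centeredIntegral (f : ℝ → E) (r x : ℝ) : E :=
  ∫ v in (-1 : ℝ)..1, f (r + x * v)

lemma continuous_centeredIntegral (hf : Continuous f) :
    Continuous fun p : ℝ × ℝ ↦ centeredIntegral f p.1 p.2 :=
  intervalIntegral.continuous_parametric_intervalIntegral_of_continuous' (by fun_prop) _ _

lemma smul_centeredIntegral (f : ℝ → E) (r x : ℝ) :
    x • centeredIntegral f r x = ∫ u in (r - x)..(r + x), f u := by
  rw [centeredIntegral, intervalIntegral.smul_integral_comp_add_mul, mul_neg_one, mul_one,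
    ← sub_eq_add_neg]

lemma even_integral_of_odd (hf : f.Odd) : Function.Even fun x ↦ ∫ u in (0 : ℝ)..x, f u := by
  intro x
  calc ∫ u in (0 : ℝ)..-x, f u
      = -∫ u in -x..-0, f u := by rw [neg_zero, intervalIntegral.integral_symm]
    _ = -∫ u in (0 : ℝ)..x, f (-u) := by rw [intervalIntegral.integral_comp_neg]
    _ = ∫ u in (0 : ℝ)..x, f u := by
      simp only [hf.eq, intervalIntegral.integral_neg, neg_neg]

lemma integral_add_sub_integral_sub_of_odd (hf : Continuous f) (hodd : f.Odd) (r x : ℝ) :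
    (∫ u in (0 : ℝ)..(x + r), f u) - ∫ u in (0 : ℝ)..(x - r), f u =
      x • centeredIntegral f r x := by
  have heven : ∫ u in (0 : ℝ)..(x - r), f u = ∫ u in (0 : ℝ)..(r - x), f u := by
    simpa only [neg_sub] using even_integral_of_odd hodd (r - x)
  rw [heven, intervalIntegral.integral_interval_sub_left (hf.intervalIntegrable _ _)
    (hf.intervalIntegrable _ _), smul_centeredIntegral, add_comm x r]

end CenteredIntegral

section ContinuousExtension

/-- The continuous extension of `x * a t x` to `x = 0`, in terms of `x` and the distance `r`
travelled by the waves, where `1 / c` is the wave speed (`c = √3` in the linearized system). -/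
noncomputable def mulAExt (c : ℝ) (a₀ b₀ : ℝ → ℝ) (r x : ℝ) : ℝ :=
  ((x + r) * a₀ (x + r) + (x - r) * a₀ (x - r)) / 2
    - c / 2 * ((x + r) * b₀ (x + r) - (x - r) * b₀ (x - r) + x * centeredIntegral b₀ r x)

/-- The continuous extension of `x * b t x` to `x = 0`, with `c` and `r` as in `mulAExt`. -/
noncomputable def mulBExt (c : ℝ) (a₀ b₀ : ℝ → ℝ) (r x : ℝ) : ℝ :=
  ((x + r) * b₀ (x + r) + (x - r) * b₀ (x - r) - r * centeredIntegral b₀ r x) / 2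
    - ((x + r) * a₀ (x + r) - (x - r) * a₀ (x - r)
      - centeredIntegral (fun u ↦ u * a₀ u) r x) / (2 * c)

variable {a₀ b₀ : ℝ → ℝ}

lemma continuous_mulAExt (c : ℝ) (ha₀ : Continuous a₀) (hb₀ : Continuous b₀) :
    Continuous fun p : ℝ × ℝ ↦ mulAExt c a₀ b₀ p.1 p.2 := by
  have hI := continuous_centeredIntegral hb₀
  unfold mulAExt
  fun_prop

lemma continuous_mulBExt (c : ℝ) (ha₀ : Continuous a₀) (hb₀ : Continuous b₀) :
    Continuous fun p : ℝ × ℝ ↦ mulBExt c a₀ b₀ p.1 p.2 := by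
  have hI := continuous_centeredIntegral hb₀
  have hJ := continuous_centeredIntegral (f := fun u ↦ u * a₀ u) (by fun_prop)
  unfold mulBExt
  fun_prop

end ContinuousExtension

lemma exists_norm_le_on_Ioo_of_eq_continuous {E : Type*} [SeminormedAddCommGroup E]
    {f : ℝ → ℝ → E} {F : ℝ × ℝ → E} (hF : Continuous F)
    (hf : ∀ t, ∀ x ≠ 0, f t x = F (t, x)) (T X : ℝ) :
    ∃ M, ∀ t ∈ Set.Ioo 0 T, ∀ x ∈ Set.Ioo 0 X, ‖f t x‖ ≤ M := by
  have hcompact : IsCompact (Set.Icc ((0, 0) : ℝ × ℝ) (T, X)) := isCompact_Icc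
  obtain ⟨M, hM⟩ := hcompact.exists_bound_of_continuousOn hF.continuousOn
  refine ⟨M, fun t ht x hx ↦ ?_⟩
  rw [hf t x hx.1.ne']
  exact hM (t, x) ⟨⟨ht.1.le, hx.1.le⟩, ht.2.le, hx.2.le⟩

theorem stmt_8_general {c : ℝ} (hc : c ≠ 0) (a₀ b₀ : ℝ → ℝ)
    (ha₀ : Continuous a₀) (hb₀ : Continuous b₀)
    (heven : ∀ x, a₀ (-x) = a₀ x) (hodd : ∀ x, b₀ (-x) = -b₀ x)
    (A₀ B₀ : ℝ → ℝ)
    (hA₀ : ∀ x, A₀ x = ∫ u in (0 : ℝ)..x, u * a₀ u)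
    (hB₀ : ∀ x, B₀ x = ∫ u in (0 : ℝ)..x, b₀ u)
    (a b : ℝ → ℝ → ℝ)
    (ha : ∀ t x, a t x =
      1 / (2 * x) * ((x + t / c) * a₀ (x + t / c) + (x - t / c) * a₀ (x - t / c))
      - c / (2 * x) * ((x + t / c) * b₀ (x + t / c) + B₀ (x + t / c))
      + c / (2 * x) * ((x - t / c) * b₀ (x - t / c) + B₀ (x - t / c)))
    (hb : ∀ t x, b t x =
      -(1 / (2 * c * x)) * ((x + t / c) * a₀ (x + t / c) - A₀ (x + t / c) / x)
      + 1 / (2 * c * x) * ((x - t / c) * a₀ (x - t / c) - A₀ (x - t / c) / x)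
      + 1 / (2 * x) * ((x + t / c) * b₀ (x + t / c) - t / (c * x) * B₀ (x + t / c))
      + 1 / (2 * x) * ((x - t / c) * b₀ (x - t / c) + t / (c * x) * B₀ (x - t / c))) :
    ∃ F : ℝ × ℝ → ℝ × ℝ, Continuous F ∧
      ∀ t, ∀ x ≠ 0, (x * a t x, x * b t x) = F (t, x) := by
  have hscale : Continuous fun p : ℝ × ℝ ↦ (p.1 / c, p.2) := by fun_prop
  refine ⟨fun p ↦ (mulAExt c a₀ b₀ (p.1 / c) p.2, mulBExt c a₀ b₀ (p.1 / c) p.2),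
    ((continuous_mulAExt c ha₀ hb₀).comp hscale).prodMk
      ((continuous_mulBExt c ha₀ hb₀).comp hscale), fun t x hx ↦ ?_⟩
  have hoddA : Function.Odd fun u ↦ u * a₀ u := fun u ↦ by simp only [heven, neg_mul]
  have hA := integral_add_sub_integral_sub_of_odd (by fun_prop) hoddA (t / c) x
  have hB := integral_add_sub_integral_sub_of_odd hb₀ hodd (t / c) x
  simp only [← hA₀, ← hB₀, smul_eq_mul] at hA hB
  have ht : t / (c * x) = t / c / x := (div_div t c x).symm
  rw [Prod.mk.injEq, ha, hb, ht, mulAExt, mulBExt]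
  -- Otherwise `field_simp` would rewrite the arguments `x ± t / c` of the data.
  generalize t / c = r at *
  constructor
  · field_simp
    linear_combination (-c) * hB
  · field_simp
    linear_combination hA - c * r * hB

/-- For even/odd `C¹` data `a₀, b₀`, the explicit solution `a, b` of the linearized
radially symmetric system has the property that `x·a(t,x)` and `x·b(t,x)` are bounded
on every bounded box `(0,T) × (0,X)` of the quarter plane. -/
theorem stmt_8 (a₀ b₀ : ℝ → ℝ) (ha₀ : ContDiff ℝ 1 a₀) (hb₀ : ContDiff ℝ 1 b₀)
    (heven : ∀ x, a₀ (-x) = a₀ x) (hodd : ∀ x, b₀ (-x) = -b₀ x)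
    (A₀ B₀ : ℝ → ℝ)
    (hA₀ : ∀ x, A₀ x = ∫ u in (0 : ℝ)..x, u * a₀ u)
    (hB₀ : ∀ x, B₀ x = ∫ u in (0 : ℝ)..x, b₀ u)
    (a b : ℝ → ℝ → ℝ)
    (ha : ∀ t x, a t x =
      1 / (2 * x) * ((x + t / Real.sqrt 3) * a₀ (x + t / Real.sqrt 3)
        + (x - t / Real.sqrt 3) * a₀ (x - t / Real.sqrt 3))
      - Real.sqrt 3 / (2 * x) * ((x + t / Real.sqrt 3) * b₀ (x + t / Real.sqrt 3)
        + B₀ (x + t / Real.sqrt 3))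
      + Real.sqrt 3 / (2 * x) * ((x - t / Real.sqrt 3) * b₀ (x - t / Real.sqrt 3)
        + B₀ (x - t / Real.sqrt 3)))
    (hb : ∀ t x, b t x =
      -(1 / (2 * Real.sqrt 3 * x)) * ((x + t / Real.sqrt 3) * a₀ (x + t / Real.sqrt 3)
        - A₀ (x + t / Real.sqrt 3) / x)
      + 1 / (2 * Real.sqrt 3 * x) * ((x - t / Real.sqrt 3) * a₀ (x - t / Real.sqrt 3)
        - A₀ (x - t / Real.sqrt 3) / x)
      + 1 / (2 * x) * ((x + t / Real.sqrt 3) * b₀ (x + t / Real.sqrt 3)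
        - t / (Real.sqrt 3 * x) * B₀ (x + t / Real.sqrt 3))
      + 1 / (2 * x) * ((x - t / Real.sqrt 3) * b₀ (x - t / Real.sqrt 3)
        + t / (Real.sqrt 3 * x) * B₀ (x - t / Real.sqrt 3))) :
    ∀ T > (0 : ℝ), ∀ X > (0 : ℝ), ∃ M : ℝ,
      ∀ t ∈ Set.Ioo (0 : ℝ) T, ∀ x ∈ Set.Ioo (0 : ℝ) X,
        |x * a t x| ≤ M ∧ |x * b t x| ≤ M := by
  intro T _ X _
  obtain ⟨F, hF, hab⟩ := stmt_8_general (by positivity : √3 ≠ 0) a₀ b₀ ha₀.continuous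
    hb₀.continuous heven hodd A₀ B₀ hA₀ hB₀ a b ha hb
  simpa only [norm_prod_le_iff, Real.norm_eq_abs] using
    exists_norm_le_on_Ioo_of_eq_continuous hF hab T X
end

section
/- The map Θ(p,u) = (p·(3+4u²), 4·p·u·√(1+u²)) is a bijection from the state space S = {(p,u) ∈ ℝ² : p > 0} onto S̃ = {(a,b) ∈ ℝ² : |b| < a}, with inverse given by p = (√(4a² − 3b²) − a)/3 and u = b/√(4·p·(p + a)). -/
/-!
Writing `(a, b) = Θ(p, u)`, one has `a + p = 4p(1 + u²)` and `a - 3p = 4pu²`, so that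
`b² = (a + p)(a - 3p)`. For `|b| < a` this quadratic equation in `p` has exactly one positive root,
and `u` is then recovered from `b`, since `4p√(1 + u²) = √(4p(p + a))` depends only on `p` and `a`.
-/

namespace RelativisticEuler

/-- The transformation `Θ` of a state, given by its pressure `p` and the radial component `u` of its
four-velocity. -/
noncomputable def theta (pu : ℝ × ℝ) : ℝ × ℝ :=
  (pu.1 * (3 + 4 * pu.2 ^ 2), 4 * pu.1 * pu.2 * √(1 + pu.2 ^ 2))

/-- The pressure of the state that `Θ` sends to `(a, b)`: the larger root `p` of the quadratic
equation `b² = (a + p)(a - 3p)`. -/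
noncomputable def pressure (a b : ℝ) : ℝ :=
  (√(4 * a ^ 2 - 3 * b ^ 2) - a) / 3

/-- The radial velocity of the state that `Θ` sends to `(a, b)`. The pressure `p` of that state is
a separate argument, as in the formula `u = b / √(4p(p + a))`. -/
noncomputable def velocity (p a b : ℝ) : ℝ :=
  b / √(4 * p * (p + a))

/-- The inverse of `Θ` on the set `|b| < a`. -/
noncomputable def thetaInv (ab : ℝ × ℝ) : ℝ × ℝ :=
  (pressure ab.1 ab.2, velocity (pressure ab.1 ab.2) ab.1 ab.2)

variable {p a b : ℝ}

theorem theta_snd_sq (pu : ℝ × ℝ) :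
    (theta pu).2 ^ 2 = ((theta pu).1 + pu.1) * ((theta pu).1 - 3 * pu.1) := by
  obtain ⟨p, u⟩ := pu
  have sqrt_sq : √(1 + u ^ 2) ^ 2 = 1 + u ^ 2 := Real.sq_sqrt (by positivity)
  simp only [theta, mul_pow, sqrt_sq]
  ring

theorem mapsTo_theta :
    Set.MapsTo theta {pu : ℝ × ℝ | 0 < pu.1} {ab : ℝ × ℝ | |ab.2| < ab.1} := by
  intro pu (hp : 0 < pu.1)
  have ha : 0 < (theta pu).1 := by
    simp only [theta]
    positivity
  refine abs_lt_of_sq_lt_sq ?_ ha.le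
  calc (theta pu).2 ^ 2
      = (theta pu).1 ^ 2 - pu.1 * (2 * (theta pu).1 + 3 * pu.1) := by rw [theta_snd_sq]; ring
    _ < (theta pu).1 ^ 2 := sub_lt_self _ (by positivity)

theorem pressure_eq_of_sq_eq (hpa : 0 ≤ 3 * p + a) (h : b ^ 2 = (a + p) * (a - 3 * p)) :
    pressure a b = p := by
  have discr_eq : 4 * a ^ 2 - 3 * b ^ 2 = (3 * p + a) ^ 2 := by rw [h]; ring
  rw [pressure, discr_eq, Real.sqrt_sq hpa]
  ring

theorem sq_eq_mul_pressure (h : 3 * b ^ 2 ≤ 4 * a ^ 2) :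
    b ^ 2 = (a + pressure a b) * (a - 3 * pressure a b) := by
  have sqrt_sq : √(4 * a ^ 2 - 3 * b ^ 2) ^ 2 = 4 * a ^ 2 - 3 * b ^ 2 :=
    Real.sq_sqrt (sub_nonneg.mpr h)
  rw [pressure]
  linear_combination sqrt_sq / 3

theorem pressure_pos (h : |b| < a) : 0 < pressure a b := by
  have sq_lt : b ^ 2 < a ^ 2 := sq_lt_sq.mpr (h.trans_le (le_abs_self a))
  have lt_sqrt : a < √(4 * a ^ 2 - 3 * b ^ 2) := Real.lt_sqrt_of_sq_lt (by linarith)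
  exact div_pos (sub_pos.mpr lt_sqrt) three_pos

theorem pressure_theta {pu : ℝ × ℝ} (hp : 0 ≤ pu.1) :
    pressure (theta pu).1 (theta pu).2 = pu.1 := by
  refine pressure_eq_of_sq_eq ?_ (theta_snd_sq pu)
  simp only [theta]
  positivity

theorem sqrt_mul_add_theta_fst {pu : ℝ × ℝ} (hp : 0 ≤ pu.1) :
    √(4 * pu.1 * (pu.1 + (theta pu).1)) = 4 * pu.1 * √(1 + pu.2 ^ 2) := by
  have sq_mul : 4 * pu.1 * (pu.1 + (theta pu).1) = (4 * pu.1) ^ 2 * (1 + pu.2 ^ 2) := by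
    simp only [theta]
    ring
  rw [sq_mul, Real.sqrt_mul (sq_nonneg _), Real.sqrt_sq (by positivity)]

theorem velocity_theta {pu : ℝ × ℝ} (hp : 0 < pu.1) :
    velocity pu.1 (theta pu).1 (theta pu).2 = pu.2 := by
  have denom_ne_zero : 4 * pu.1 * √(1 + pu.2 ^ 2) ≠ 0 := by positivity
  rw [velocity, sqrt_mul_add_theta_fst hp.le, div_eq_iff denom_ne_zero, theta]
  ring

theorem velocity_sq (hp : 0 < p) (hpa : 0 < p + a) (h : b ^ 2 = (a + p) * (a - 3 * p)) :
    velocity p a b ^ 2 = (a - 3 * p) / (4 * p) := by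
  rw [velocity, div_pow, Real.sq_sqrt (by positivity), h]
  field_simp
  ring

theorem theta_velocity (hp : 0 < p) (hpa : 0 < p + a) (h : b ^ 2 = (a + p) * (a - 3 * p)) :
    theta (p, velocity p a b) = (a, b) := by
  have fst_eq : (theta (p, velocity p a b)).1 = a := by
    simp only [theta, velocity_sq hp hpa h]
    field_simp
    ring
  have sqrt_eq : 4 * p * √(1 + velocity p a b ^ 2) = √(4 * p * (p + a)) := by
    simpa only [fst_eq] using (sqrt_mul_add_theta_fst (pu := (p, velocity p a b)) hp.le).symm
  have sqrt_ne_zero : √(4 * p * (p + a)) ≠ 0 := (Real.sqrt_pos.mpr (by positivity)).ne'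
  refine Prod.ext fst_eq ?_
  calc 4 * p * velocity p a b * √(1 + velocity p a b ^ 2)
      = velocity p a b * √(4 * p * (p + a)) := by rw [← sqrt_eq]; ring
    _ = b := div_mul_cancel₀ b sqrt_ne_zero

theorem mapsTo_thetaInv :
    Set.MapsTo thetaInv {ab : ℝ × ℝ | |ab.2| < ab.1} {pu : ℝ × ℝ | 0 < pu.1} :=
  fun _ hab ↦ pressure_pos hab

theorem leftInvOn_thetaInv_theta : Set.LeftInvOn thetaInv theta {pu : ℝ × ℝ | 0 < pu.1} := by
  intro pu (hp : 0 < pu.1)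
  rw [thetaInv, pressure_theta hp.le, velocity_theta hp]

theorem rightInvOn_thetaInv_theta :
    Set.RightInvOn thetaInv theta {ab : ℝ × ℝ | |ab.2| < ab.1} := by
  rintro ⟨a, b⟩ (hab : |b| < a)
  have ha : 0 < a := (abs_nonneg b).trans_lt hab
  have sq_lt : b ^ 2 < a ^ 2 := sq_lt_sq.mpr (hab.trans_le (le_abs_self a))
  have hp : 0 < pressure a b := pressure_pos hab
  exact theta_velocity hp (add_pos hp ha) (sq_eq_mul_pressure (by linarith [sq_nonneg a]))

theorem bijOn_theta :
    Set.BijOn theta {pu : ℝ × ℝ | 0 < pu.1} {ab : ℝ × ℝ | |ab.2| < ab.1} :=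
  Set.InvOn.bijOn ⟨leftInvOn_thetaInv_theta, rightInvOn_thetaInv_theta⟩
    mapsTo_theta mapsTo_thetaInv

end RelativisticEuler

/-- The transformation `Θ(p,u) = (p(3+4u²), 4pu√(1+u²))` is a bijection from the state
space `S = {(p,u) : p > 0}` onto `S̃ = {(a,b) : |b| < a}`, with inverse given by
`p = (√(4a² − 3b²) − a)/3` and `u = b/√(4p(p+a))`. -/
theorem stmt_11 :
    Set.BijOn
      (fun pu : ℝ × ℝ => (pu.1 * (3 + 4 * pu.2 ^ 2), 4 * pu.1 * pu.2 * Real.sqrt (1 + pu.2 ^ 2)))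
      {pu : ℝ × ℝ | 0 < pu.1} {ab : ℝ × ℝ | |ab.2| < ab.1} ∧
    ∀ p u : ℝ, 0 < p →
      (Real.sqrt (4 * (p * (3 + 4 * u ^ 2)) ^ 2
          - 3 * (4 * p * u * Real.sqrt (1 + u ^ 2)) ^ 2) - p * (3 + 4 * u ^ 2)) / 3 = p ∧
      (4 * p * u * Real.sqrt (1 + u ^ 2))
        / Real.sqrt (4 * p * (p + p * (3 + 4 * u ^ 2))) = u :=
  ⟨RelativisticEuler.bijOn_theta, fun p u hp ↦
    ⟨RelativisticEuler.pressure_theta (pu := (p, u)) hp.le,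
      RelativisticEuler.velocity_theta (pu := (p, u)) hp⟩⟩
end

section
/- Let p > 0 and u ∈ ℝ, set a = p·(3+4u²), b = 4·p·u·√(1+u²), and c = (5/3)·a − (2/3)·√(4a² − 3b²). Then p^{3/4}·√(1+u²) = 2^{−7/4}·(3a − c)^{1/2}·(a − c)^{1/4}, and consequently p^{3/4}·|u| ≤ p^{3/4}·√(1+u²) ≤ (a/3)^{3/4}. -/
/-!
On the state `Θ(p,u) = (a,b)` the discriminant `4a² − 3b²` is the perfect square `(p(6 + 4u²))²`,
so `c = p(1 + 4u²)`, `3a − c = 2³p(1 + u²)` and `a − c = 2p`; this is the entropy formula.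
For fixed `a` its right-hand side decreases in `c`, and `c ≥ a/3`. The value `c = a/3` is attained
by the fluid at rest with pressure `a/3`, whose entropy density is `(a/3)^{3/4}`.
-/

namespace UltraRelativisticEuler

/-- The momentum flux `c(a,b)` as a function of the energy density `a` and the momentum
density `b`. -/
noncomputable def momentumFlux (a b : ℝ) : ℝ :=
  5 / 3 * a - 2 / 3 * √(4 * a ^ 2 - 3 * b ^ 2)

/-- The entropy density as a function of the energy density `a` and the momentum flux `c`;
physical states have `0 ≤ a / 3 ≤ c ≤ a`, where the bases of both powers are nonnegative. -/
noncomputable def entropyOfFlux (a c : ℝ) : ℝ :=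
  2 ^ (-(7 : ℝ) / 4) * (3 * a - c) ^ ((1 : ℝ) / 2) * (a - c) ^ ((1 : ℝ) / 4)

theorem discriminant_eq_sq (p u : ℝ) :
    4 * (p * (3 + 4 * u ^ 2)) ^ 2 - 3 * (4 * p * u * √(1 + u ^ 2)) ^ 2
      = (p * (6 + 4 * u ^ 2)) ^ 2 := by
  rw [mul_pow _ √(1 + u ^ 2), Real.sq_sqrt (by positivity)]
  ring

theorem momentumFlux_eq {p : ℝ} (hp : 0 ≤ p) (u : ℝ) :
    momentumFlux (p * (3 + 4 * u ^ 2)) (4 * p * u * √(1 + u ^ 2)) = p * (1 + 4 * u ^ 2) := by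
  rw [momentumFlux, discriminant_eq_sq, Real.sqrt_sq (by positivity)]
  ring

theorem two_rpow_mul_rpow_mul_rpow_eq {x y : ℝ} (hx : 0 ≤ x) (hy : 0 ≤ y) :
    (2 : ℝ) ^ (-(7 : ℝ) / 4) * (2 ^ (3 : ℝ) * x) ^ ((1 : ℝ) / 2) * (2 * y) ^ ((1 : ℝ) / 4)
      = √x * y ^ ((1 : ℝ) / 4) := by
  have powers_of_two :
      (2 : ℝ) ^ (-(7 : ℝ) / 4) * 2 ^ ((3 : ℝ) * (1 / 2)) * 2 ^ ((1 : ℝ) / 4) = 1 := by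
    rw [← Real.rpow_add two_pos, ← Real.rpow_add two_pos]
    norm_num
  rw [Real.mul_rpow (by positivity) hx, Real.mul_rpow zero_le_two hy,
    ← Real.rpow_mul zero_le_two, ← Real.sqrt_eq_rpow]
  linear_combination √x * y ^ ((1 : ℝ) / 4) * powers_of_two

theorem entropyOfFlux_eq {p : ℝ} (hp : 0 ≤ p) (u : ℝ) :
    entropyOfFlux (p * (3 + 4 * u ^ 2)) (p * (1 + 4 * u ^ 2))
      = p ^ ((3 : ℝ) / 4) * √(1 + u ^ 2) := by
  have three_mul_sub :
      3 * (p * (3 + 4 * u ^ 2)) - p * (1 + 4 * u ^ 2) = 2 ^ (3 : ℝ) * (p * (1 + u ^ 2)) := by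
    norm_num
    ring
  have sub_eq : p * (3 + 4 * u ^ 2) - p * (1 + 4 * u ^ 2) = 2 * p := by ring
  have rpow_split : p ^ ((3 : ℝ) / 4) = √p * p ^ ((1 : ℝ) / 4) := by
    rw [Real.sqrt_eq_rpow, ← Real.rpow_add_of_nonneg hp (by norm_num) (by norm_num)]
    norm_num
  rw [entropyOfFlux, three_mul_sub, sub_eq, two_rpow_mul_rpow_mul_rpow_eq (by positivity) hp,
    Real.sqrt_mul hp, rpow_split]
  ring

theorem antitoneOn_entropyOfFlux {a : ℝ} (ha : 0 ≤ a) :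
    AntitoneOn (entropyOfFlux a) (Set.Iic a) := by
  intro c _ d hd hcd
  have hda : d ≤ a := hd
  have three_mul_sub_d_nonneg : 0 ≤ 3 * a - d := by linarith
  have three_mul_sub_c_nonneg : 0 ≤ 3 * a - c := by linarith
  unfold entropyOfFlux
  gcongr

theorem entropyOfFlux_div_three {a : ℝ} (ha : 0 ≤ a) :
    entropyOfFlux a (a / 3) = (a / 3) ^ ((3 : ℝ) / 4) := by
  have at_rest := entropyOfFlux_eq (div_nonneg ha zero_le_three) 0
  simpa using at_rest

theorem entropyOfFlux_le {a c : ℝ} (hac : a / 3 ≤ c) (hca : c ≤ a) :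
    entropyOfFlux a c ≤ (a / 3) ^ ((3 : ℝ) / 4) := by
  have ha : 0 ≤ a := by linarith
  rw [← entropyOfFlux_div_three ha]
  exact antitoneOn_entropyOfFlux ha (hac.trans hca) hca hac

end UltraRelativisticEuler

/-- With `(a,b) = Θ(p,u)` and `c = c(a,b)`, the entropy density satisfies
`p^{3/4}√(1+u²) = 2^{−7/4}(3a − c)^{1/2}(a − c)^{1/4}`, and consequently
`p^{3/4}|u| ≤ p^{3/4}√(1+u²) ≤ (a/3)^{3/4}`. -/
theorem stmt_12 (p u a b c : ℝ) (hp : 0 < p)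
    (ha : a = p * (3 + 4 * u ^ 2))
    (hb : b = 4 * p * u * Real.sqrt (1 + u ^ 2))
    (hc : c = 5 / 3 * a - 2 / 3 * Real.sqrt (4 * a ^ 2 - 3 * b ^ 2)) :
    p ^ ((3 : ℝ) / 4) * Real.sqrt (1 + u ^ 2)
      = 2 ^ (-(7 : ℝ) / 4) * (3 * a - c) ^ ((1 : ℝ) / 2) * (a - c) ^ ((1 : ℝ) / 4) ∧
    p ^ ((3 : ℝ) / 4) * |u| ≤ p ^ ((3 : ℝ) / 4) * Real.sqrt (1 + u ^ 2) ∧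
    p ^ ((3 : ℝ) / 4) * Real.sqrt (1 + u ^ 2) ≤ (a / 3) ^ ((3 : ℝ) / 4) := by
  have flux : c = p * (1 + 4 * u ^ 2) := by
    rw [hc, hb, ha]
    exact UltraRelativisticEuler.momentumFlux_eq hp.le u
  have entropy : p ^ ((3 : ℝ) / 4) * √(1 + u ^ 2) = UltraRelativisticEuler.entropyOfFlux a c := by
    rw [ha, flux, UltraRelativisticEuler.entropyOfFlux_eq hp.le]
  have third_le_flux : a / 3 ≤ c := by
    rw [ha, flux]
    linarith [mul_nonneg hp.le (sq_nonneg u)]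
  have flux_le : c ≤ a := by
    rw [ha, flux]
    linarith
  refine ⟨entropy, ?_, ?_⟩
  · gcongr
    exact Real.abs_le_sqrt (by linarith)
  · rw [entropy]
    exact UltraRelativisticEuler.entropyOfFlux_le third_le_flux flux_le
end

section
/- Let F₀ : ℝ → ℝ be a C² function and f₀ = F₀'. Define, for t > 0 and x > 0, a₊(t,x) = f₀(x + t/√3)/x and b₊(t,x) = −f₀(x + t/√3)/(√3·x) + F₀(x + t/√3)/(√3·x²). Then a₊, b₊ satisfy the linearized system: ∂/∂t (x²·a₊(t,x)) + ∂/∂x (x²·b₊(t,x)) = 0 and ∂/∂t (x²·b₊(t,x)) + ∂/∂x ((x²/3)·a₊(t,x)) = (2x/3)·a₊(t,x) for all t > 0, x > 0; moreover a₊(t,x) → f₀(x)/x and b₊(t,x) → −f₀(x)/(√3·x) + F₀(x)/(√3·x²) as t ↓ 0 for each x > 0. -/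
open Filter

/-!
Multiplication by `x ^ 2` removes the denominators of the ansatz: at `z = x + c * t`, the
conserved quantities are `x ^ 2 * a = x * f z` and `x ^ 2 * b = c * (F z - x * f z)`. As `F' = f`,
their derivatives involve only `f z` and `f' z`. The terms in `f' z` cancel in both equations, and
in the second one `2 * c ^ 2 * f z` remains, which is the source `2 * c ^ 2 * x * a`.
-/

open scoped Topology

namespace RadialWave

section Field

variable {𝕜 : Type*} [Field 𝕜]

/-- The component `a` of the radial wave with profile `f` travelling towards the origin at
speed `c`. In `stmt_13`, `c = 1 / √3`. -/
def a (f : 𝕜 → 𝕜) (c t x : 𝕜) : 𝕜 := f (x + c * t) / x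

/-- The component `b` of the same radial wave, where `F` is meant to be a primitive of the
profile `f`. -/
def b (F f : 𝕜 → 𝕜) (c t x : 𝕜) : 𝕜 := c * (F (x + c * t) / x ^ 2 - f (x + c * t) / x)

theorem sq_mul_a (f : 𝕜 → 𝕜) (c t x : 𝕜) : x ^ 2 * a f c t x = x * f (x + c * t) := by
  rw [a]
  field_simp

theorem mul_a (f : 𝕜 → 𝕜) (c t : 𝕜) {x : 𝕜} (hx : x ≠ 0) : x * a f c t x = f (x + c * t) :=
  mul_div_cancel₀ _ hx

theorem sq_mul_b (F f : 𝕜 → 𝕜) (c t : 𝕜) {x : 𝕜} (hx : x ≠ 0) :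
    x ^ 2 * b F f c t x = c * (F (x + c * t) - x * f (x + c * t)) := by
  rw [b]
  field_simp

variable [TopologicalSpace 𝕜] [IsTopologicalRing 𝕜] {F f : 𝕜 → 𝕜} {x : 𝕜}

theorem tendsto_comp_add_mul (hf : ContinuousAt f x) (c : 𝕜) :
    Tendsto (fun t => f (x + c * t)) (𝓝 0) (𝓝 (f x)) := by
  have hz : Tendsto (fun t => x + c * t) (𝓝 0) (𝓝 x) :=
    Continuous.tendsto' (by fun_prop) 0 x (by simp only [mul_zero, add_zero])
  exact hf.tendsto.comp hz

theorem tendsto_a (hf : ContinuousAt f x) (c : 𝕜) :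
    Tendsto (fun t => a f c t x) (𝓝 0) (𝓝 (f x / x)) :=
  (tendsto_comp_add_mul hf c).div_const x

theorem tendsto_b (hF : ContinuousAt F x) (hf : ContinuousAt f x) (c : 𝕜) :
    Tendsto (fun t => b F f c t x) (𝓝 0) (𝓝 (c * (F x / x ^ 2 - f x / x))) :=
  (((tendsto_comp_add_mul hF c).div_const _).sub
    ((tendsto_comp_add_mul hf c).div_const x)).const_mul c

end Field

section Deriv

variable {𝕜 : Type*} [NontriviallyNormedField 𝕜] {F f : 𝕜 → 𝕜} {f' c t x : 𝕜}

theorem hasDerivAt_comp_time (hf : HasDerivAt f f' (x + c * t)) :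
    HasDerivAt (fun s => f (x + c * s)) (c * f') t := by
  have hz : HasDerivAt (fun s => x + c * s) c t := by
    simpa only [mul_one] using ((hasDerivAt_id' t).const_mul c).const_add x
  simpa only [mul_comm c, Function.comp_def] using hf.comp t hz

theorem hasDerivAt_time_sq_mul_a (hf : HasDerivAt f f' (x + c * t)) :
    HasDerivAt (fun s => x ^ 2 * a f c s x) (x * (c * f')) t := by
  simpa only [sq_mul_a] using (hasDerivAt_comp_time hf).const_mul x

theorem hasDerivAt_time_sq_mul_b (hx : x ≠ 0) (hF : HasDerivAt F (f (x + c * t)) (x + c * t))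
    (hf : HasDerivAt f f' (x + c * t)) :
    HasDerivAt (fun s => x ^ 2 * b F f c s x) (c * (c * f (x + c * t) - x * (c * f'))) t := by
  simpa only [sq_mul_b _ _ _ _ hx] using
    ((hasDerivAt_comp_time hF).fun_sub ((hasDerivAt_comp_time hf).const_mul x)).const_mul c

theorem hasDerivAt_space_mul_comp (hf : HasDerivAt f f' (x + c * t)) :
    HasDerivAt (fun y => y * f (y + c * t)) (f (x + c * t) + x * f') x := by
  simpa only [one_mul] using (hasDerivAt_id' x).fun_mul (hf.comp_add_const x (c * t))

theorem hasDerivAt_space_sq_mul_a (hf : HasDerivAt f f' (x + c * t)) :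
    HasDerivAt (fun y => y ^ 2 * a f c t y) (f (x + c * t) + x * f') x := by
  simpa only [sq_mul_a] using hasDerivAt_space_mul_comp hf

theorem hasDerivAt_space_sq_mul_b (hx : x ≠ 0) (hF : HasDerivAt F (f (x + c * t)) (x + c * t))
    (hf : HasDerivAt f f' (x + c * t)) :
    HasDerivAt (fun y => y ^ 2 * b F f c t y) (-(c * (x * f'))) x := by
  have hb_eq : (fun y => y ^ 2 * b F f c t y) =ᶠ[𝓝 x]
      fun y => c * (F (y + c * t) - y * f (y + c * t)) :=
    (eventually_ne_nhds hx).mono fun y hy => sq_mul_b F f c t hy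
  refine HasDerivAt.congr_of_eventuallyEq ?_ hb_eq
  have hderiv :=
    ((hF.comp_add_const x (c * t)).fun_sub (hasDerivAt_space_mul_comp hf)).const_mul c
  simpa only [sub_add_cancel_left, mul_neg] using hderiv

theorem deriv_time_sq_mul_a_add_deriv_space_sq_mul_b (hx : x ≠ 0)
    (hF : HasDerivAt F (f (x + c * t)) (x + c * t)) (hf : DifferentiableAt 𝕜 f (x + c * t)) :
    deriv (fun s => x ^ 2 * a f c s x) t + deriv (fun y => y ^ 2 * b F f c t y) x = 0 := by
  rw [(hasDerivAt_time_sq_mul_a hf.hasDerivAt).deriv,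
    (hasDerivAt_space_sq_mul_b hx hF hf.hasDerivAt).deriv]
  ring

theorem deriv_time_sq_mul_b_add_deriv_space_sq_mul_a (hx : x ≠ 0)
    (hF : HasDerivAt F (f (x + c * t)) (x + c * t)) (hf : DifferentiableAt 𝕜 f (x + c * t)) :
    deriv (fun s => x ^ 2 * b F f c s x) t + deriv (fun y => c ^ 2 * (y ^ 2 * a f c t y)) x
      = 2 * c ^ 2 * (x * a f c t x) := by
  rw [(hasDerivAt_time_sq_mul_b hx hF hf.hasDerivAt).deriv,
    ((hasDerivAt_space_sq_mul_a hf.hasDerivAt).const_mul (c ^ 2)).deriv, mul_a f c t hx]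
  ring

end Deriv

end RadialWave

open RadialWave in
theorem stmt_13_general {κ : ℝ} (hκ : 0 < κ) {F₀ f₀ : ℝ → ℝ}
    (hF₀ : ∀ z > 0, HasDerivAt F₀ (f₀ z) z) (hf₀ : ∀ z > 0, DifferentiableAt ℝ f₀ z)
    {aP bP : ℝ → ℝ → ℝ}
    (haP : ∀ t x, aP t x = f₀ (x + t / √κ) / x)
    (hbP : ∀ t x, bP t x = -f₀ (x + t / √κ) / (√κ * x) + F₀ (x + t / √κ) / (√κ * x ^ 2)) :
    (∀ t > 0, ∀ x > 0,
      deriv (fun s => x ^ 2 * aP s x) t + deriv (fun y => y ^ 2 * bP t y) x = 0 ∧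
      deriv (fun s => x ^ 2 * bP s x) t + deriv (fun y => y ^ 2 / κ * aP t y) x
        = 2 * x / κ * aP t x) ∧
    (∀ x > 0,
      Tendsto (fun t => aP t x) (𝓝[>] 0) (𝓝 (f₀ x / x)) ∧
      Tendsto (fun t => bP t x) (𝓝[>] 0)
        (𝓝 (-f₀ x / (√κ * x) + F₀ x / (√κ * x ^ 2)))) := by
  obtain ⟨c, hc⟩ : ∃ c, c = (√κ)⁻¹ := ⟨_, rfl⟩
  have hc_pos : 0 < c := hc ▸ inv_pos.2 (Real.sqrt_pos.2 hκ)
  have hc_sq : c ^ 2 = κ⁻¹ := by rw [hc, inv_pow, Real.sq_sqrt hκ.le]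
  have hb_form (u v x : ℝ) : -u / (√κ * x) + v / (√κ * x ^ 2) = c * (v / x ^ 2 - u / x) := by
    rw [hc]
    field_simp
    ring
  obtain rfl : aP = a f₀ c := by
    funext t x
    rw [haP, a, div_eq_inv_mul t, hc]
  obtain rfl : bP = b F₀ f₀ c := by
    funext t x
    rw [hbP, hb_form, b, div_eq_inv_mul t, hc]
  refine ⟨fun t ht x hx => ?_, fun x hx => ?_⟩
  · have hz : 0 < x + c * t := by positivity
    refine ⟨deriv_time_sq_mul_a_add_deriv_space_sq_mul_b hx.ne' (hF₀ _ hz) (hf₀ _ hz), ?_⟩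
    convert deriv_time_sq_mul_b_add_deriv_space_sq_mul_a hx.ne' (hF₀ _ hz) (hf₀ _ hz) using 1
    · simp only [hc_sq, div_eq_inv_mul, mul_assoc]
    · rw [hc_sq]
      ring
  · have hf_cont : ContinuousAt f₀ x := (hf₀ x hx).continuousAt
    rw [hb_form]
    exact ⟨(tendsto_a hf_cont c).mono_left nhdsWithin_le_nhds,
      (tendsto_b (hF₀ x hx).continuousAt hf_cont c).mono_left nhdsWithin_le_nhds⟩

/-- The outgoing-wave ansatz `a₊(t,x) = f₀(x + t/√3)/x`,
`b₊(t,x) = −f₀(x + t/√3)/(√3 x) + F₀(x + t/√3)/(√3 x²)` with `f₀ = F₀'` and `F₀ ∈ C²`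
solves the linearized radially symmetric system and attains the stated initial values
as `t ↓ 0`. -/
theorem stmt_13 (F₀ f₀ : ℝ → ℝ) (hF₀ : ContDiff ℝ 2 F₀) (hf₀ : f₀ = deriv F₀)
    (aP bP : ℝ → ℝ → ℝ)
    (haP : ∀ t x, aP t x = f₀ (x + t / Real.sqrt 3) / x)
    (hbP : ∀ t x, bP t x = -f₀ (x + t / Real.sqrt 3) / (Real.sqrt 3 * x)
      + F₀ (x + t / Real.sqrt 3) / (Real.sqrt 3 * x ^ 2)) :
    (∀ t > (0 : ℝ), ∀ x > (0 : ℝ),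
      deriv (fun s => x ^ 2 * aP s x) t + deriv (fun y => y ^ 2 * bP t y) x = 0 ∧
      deriv (fun s => x ^ 2 * bP s x) t + deriv (fun y => y ^ 2 / 3 * aP t y) x
        = 2 * x / 3 * aP t x) ∧
    (∀ x > (0 : ℝ),
      Tendsto (fun t => aP t x) (nhdsWithin 0 (Set.Ioi 0)) (nhds (f₀ x / x)) ∧
      Tendsto (fun t => bP t x) (nhdsWithin 0 (Set.Ioi 0))
        (nhds (-f₀ x / (Real.sqrt 3 * x) + F₀ x / (Real.sqrt 3 * x ^ 2)))) := by
  subst hf₀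
  exact stmt_13_general (κ := 3) three_pos
    (fun z _ => (hF₀.differentiable two_ne_zero z).hasDerivAt)
    (fun z _ => hF₀.differentiable_deriv_two z) haP hbP
end

section
/- Let F₀ : ℝ → ℝ be a C² function and f₀ = F₀'. Define, for t > 0 and x > 0, a₋(t,x) = f₀(x − t/√3)/x and b₋(t,x) = f₀(x − t/√3)/(√3·x) − F₀(x − t/√3)/(√3·x²). Then a₋, b₋ satisfy the linearized system: ∂/∂t (x²·a₋(t,x)) + ∂/∂x (x²·b₋(t,x)) = 0 and ∂/∂t (x²·b₋(t,x)) + ∂/∂x ((x²/3)·a₋(t,x)) = (2x/3)·a₋(t,x) for all t > 0, x > 0; moreover a₋(t,x) → f₀(x)/x and b₋(t,x) → f₀(x)/(√3·x) − F₀(x)/(√3·x²) as t ↓ 0 for each x > 0. -/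
open Filter

/-! Multiplication by `x²` removes the singular coefficients of the waves
`a = f (x - c t) / x`, `b = c f (x - c t) / x - c F (x - c t) / x²`: it turns them into
`x f (x - c t)` and `c (x f (x - c t) - F (x - c t))`. Since `F' = f`, the `x`-derivative of the
latter loses its `f`-terms and is `c x f'`, which cancels the `t`-derivative of the former. In the
second equation the `f'`-terms cancel and the `f`-terms add up to the source `2 c² f = 2 c² x a`.
For the ultra-relativistic system, `c = 1/√3`. -/

section SphericalWave

open scoped Topology

variable {𝕜 : Type*} [NontriviallyNormedField 𝕜] {F f : 𝕜 → 𝕜} {f' c t x : 𝕜}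

/-- The density `a` of the spherical wave with profile `f` and speed `c`, as a function of time and
radius. It is the paper's `a₋` for `c = 1/√3`. -/
def waveDensity (f : 𝕜 → 𝕜) (c t x : 𝕜) : 𝕜 :=
  f (x - c * t) / x

/-- The flux `b` accompanying `waveDensity f c`, where `F` is a primitive of the profile `f`. It is
the paper's `b₋` for `c = 1/√3`. -/
def waveFlux (F f : 𝕜 → 𝕜) (c t x : 𝕜) : 𝕜 :=
  c * f (x - c * t) / x - c * F (x - c * t) / x ^ 2

theorem waveDensity_inv (f : 𝕜 → 𝕜) (k t x : 𝕜) :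
    waveDensity f k⁻¹ t x = f (x - t / k) / x := by
  rw [waveDensity, div_eq_inv_mul t]

theorem waveFlux_inv (F f : 𝕜 → 𝕜) (k t x : 𝕜) :
    waveFlux F f k⁻¹ t x = f (x - t / k) / (k * x) - F (x - t / k) / (k * x ^ 2) := by
  simp only [waveFlux, ← div_eq_inv_mul, div_div]

-- At `x = 0` both sides vanish.
theorem sq_mul_waveDensity (f : 𝕜 → 𝕜) (c t x : 𝕜) :
    x ^ 2 * waveDensity f c t x = x * f (x - c * t) := by
  rw [waveDensity, ← mul_div_assoc, mul_div_right_comm, pow_two, mul_self_div_self]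

theorem sq_mul_waveFlux (F f : 𝕜 → 𝕜) (c t : 𝕜) (hx : x ≠ 0) :
    x ^ 2 * waveFlux F f c t x = c * (x * f (x - c * t) - F (x - c * t)) := by
  rw [waveFlux]
  field_simp

theorem hasDerivAt_comp_sub_mul (hf : HasDerivAt f f' (x - c * t)) :
    HasDerivAt (fun s => f (x - c * s)) (-(c * f')) t := by
  have phase : HasDerivAt (fun s => x - c * s) (-c) t := by
    simpa using ((hasDerivAt_id t).const_mul c).const_sub x
  simpa only [Function.comp_def, neg_mul, mul_comm f'] using hf.comp t phase

theorem hasDerivAt_id_mul_comp_sub (hf : HasDerivAt f f' (x - t)) :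
    HasDerivAt (fun y => y * f (y - t)) (f (x - t) + x * f') x := by
  simpa only [one_mul] using (hasDerivAt_id' x).fun_mul (hf.comp_sub_const x t)

theorem hasDerivAt_sq_mul_waveDensity_time (hf : HasDerivAt f f' (x - c * t)) :
    HasDerivAt (fun s => x ^ 2 * waveDensity f c s x) (-(c * x * f')) t := by
  simp only [sq_mul_waveDensity]
  exact ((hasDerivAt_comp_sub_mul hf).const_mul x).congr_deriv (by ring)

theorem hasDerivAt_sq_mul_waveDensity_radius (hf : HasDerivAt f f' (x - c * t)) :
    HasDerivAt (fun y => y ^ 2 * waveDensity f c t y) (f (x - c * t) + x * f') x := by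
  simp only [sq_mul_waveDensity]
  exact hasDerivAt_id_mul_comp_sub hf

theorem hasDerivAt_sq_mul_waveFlux_time (hx : x ≠ 0)
    (hF : HasDerivAt F (f (x - c * t)) (x - c * t)) (hf : HasDerivAt f f' (x - c * t)) :
    HasDerivAt (fun s => x ^ 2 * waveFlux F f c s x) (c ^ 2 * (f (x - c * t) - x * f')) t := by
  simp only [sq_mul_waveFlux F f c _ hx]
  exact ((((hasDerivAt_comp_sub_mul hf).const_mul x).sub
    (hasDerivAt_comp_sub_mul hF)).const_mul c).congr_deriv (by ring)

theorem hasDerivAt_sq_mul_waveFlux_radius (hx : x ≠ 0)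
    (hF : HasDerivAt F (f (x - c * t)) (x - c * t)) (hf : HasDerivAt f f' (x - c * t)) :
    HasDerivAt (fun y => y ^ 2 * waveFlux F f c t y) (c * x * f') x := by
  have regularized : HasDerivAt (fun y => c * (y * f (y - c * t) - F (y - c * t))) (c * x * f') x :=
    (((hasDerivAt_id_mul_comp_sub hf).sub (hF.comp_sub_const x (c * t))).const_mul c).congr_deriv
      (by ring)
  refine regularized.congr_of_eventuallyEq ?_
  filter_upwards [eventually_ne_nhds hx] with y hy using sq_mul_waveFlux F f c t hy

theorem wave_conservation_law (hx : x ≠ 0) (hF : HasDerivAt F (f (x - c * t)) (x - c * t))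
    (hf : DifferentiableAt 𝕜 f (x - c * t)) :
    deriv (fun s => x ^ 2 * waveDensity f c s x) t +
      deriv (fun y => y ^ 2 * waveFlux F f c t y) x = 0 := by
  rw [(hasDerivAt_sq_mul_waveDensity_time hf.hasDerivAt).deriv,
    (hasDerivAt_sq_mul_waveFlux_radius hx hF hf.hasDerivAt).deriv, neg_add_cancel]

theorem wave_balance_law (hx : x ≠ 0) (hF : HasDerivAt F (f (x - c * t)) (x - c * t))
    (hf : DifferentiableAt 𝕜 f (x - c * t)) :
    deriv (fun s => x ^ 2 * waveFlux F f c s x) t +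
      deriv (fun y => y ^ 2 * c ^ 2 * waveDensity f c t y) x =
        2 * x * c ^ 2 * waveDensity f c t x := by
  simp only [mul_right_comm _ (c ^ 2) (waveDensity _ _ _ _)]
  rw [(hasDerivAt_sq_mul_waveFlux_time hx hF hf.hasDerivAt).deriv,
    ((hasDerivAt_sq_mul_waveDensity_radius hf.hasDerivAt).mul_const (c ^ 2)).deriv, waveDensity]
  field_simp
  ring

theorem tendsto_comp_sub_mul_zero (hf : ContinuousAt f x) (c : 𝕜) :
    Tendsto (fun t => f (x - c * t)) (𝓝 0) (𝓝 (f x)) := by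
  have phase : Tendsto (fun t => x - c * t) (𝓝 0) (𝓝 x) :=
    Continuous.tendsto' (by fun_prop) 0 x (by simp)
  exact hf.tendsto.comp phase

theorem tendsto_waveDensity_zero (hf : ContinuousAt f x) (c : 𝕜) :
    Tendsto (fun t => waveDensity f c t x) (𝓝 0) (𝓝 (f x / x)) :=
  (tendsto_comp_sub_mul_zero hf c).div_const x

theorem tendsto_waveFlux_zero (hF : ContinuousAt F x) (hf : ContinuousAt f x) (c : 𝕜) :
    Tendsto (fun t => waveFlux F f c t x) (𝓝 0) (𝓝 (c * f x / x - c * F x / x ^ 2)) :=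
  (((tendsto_comp_sub_mul_zero hf c).const_mul c).div_const x).sub
    (((tendsto_comp_sub_mul_zero hF c).const_mul c).div_const (x ^ 2))

theorem stmt_14_general (hF : ∀ u, HasDerivAt F (f u) u) (hf : Differentiable 𝕜 f) (c : 𝕜)
    (hx : x ≠ 0) :
    (∀ t, deriv (fun s => x ^ 2 * waveDensity f c s x) t +
        deriv (fun y => y ^ 2 * waveFlux F f c t y) x = 0 ∧
      deriv (fun s => x ^ 2 * waveFlux F f c s x) t +
        deriv (fun y => y ^ 2 * c ^ 2 * waveDensity f c t y) x =
          2 * x * c ^ 2 * waveDensity f c t x) ∧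
    Tendsto (fun t => waveDensity f c t x) (𝓝 0) (𝓝 (f x / x)) ∧
    Tendsto (fun t => waveFlux F f c t x) (𝓝 0) (𝓝 (c * f x / x - c * F x / x ^ 2)) :=
  ⟨fun _ => ⟨wave_conservation_law hx (hF _) (hf _), wave_balance_law hx (hF _) (hf _)⟩,
    tendsto_waveDensity_zero (hf x).continuousAt c,
    tendsto_waveFlux_zero (hF x).continuousAt (hf x).continuousAt c⟩

end SphericalWave

/-- The incoming-wave ansatz `a₋(t,x) = f₀(x − t/√3)/x`,
`b₋(t,x) = f₀(x − t/√3)/(√3 x) − F₀(x − t/√3)/(√3 x²)` with `f₀ = F₀'` and `F₀ ∈ C²`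
solves the linearized radially symmetric system and attains the stated initial values
as `t ↓ 0`. -/
theorem stmt_14 (F₀ f₀ : ℝ → ℝ) (hF₀ : ContDiff ℝ 2 F₀) (hf₀ : f₀ = deriv F₀)
    (aM bM : ℝ → ℝ → ℝ)
    (haM : ∀ t x, aM t x = f₀ (x - t / Real.sqrt 3) / x)
    (hbM : ∀ t x, bM t x = f₀ (x - t / Real.sqrt 3) / (Real.sqrt 3 * x)
      - F₀ (x - t / Real.sqrt 3) / (Real.sqrt 3 * x ^ 2)) :
    (∀ t > (0 : ℝ), ∀ x > (0 : ℝ),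
      deriv (fun s => x ^ 2 * aM s x) t + deriv (fun y => y ^ 2 * bM t y) x = 0 ∧
      deriv (fun s => x ^ 2 * bM s x) t + deriv (fun y => y ^ 2 / 3 * aM t y) x
        = 2 * x / 3 * aM t x) ∧
    (∀ x > (0 : ℝ),
      Tendsto (fun t => aM t x) (nhdsWithin 0 (Set.Ioi 0)) (nhds (f₀ x / x)) ∧
      Tendsto (fun t => bM t x) (nhdsWithin 0 (Set.Ioi 0))
        (nhds (f₀ x / (Real.sqrt 3 * x) - F₀ x / (Real.sqrt 3 * x ^ 2)))) := by
  obtain rfl : aM = waveDensity f₀ (√3)⁻¹ :=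
    funext₂ fun t x => by rw [haM, waveDensity_inv]
  obtain rfl : bM = waveFlux F₀ f₀ (√3)⁻¹ :=
    funext₂ fun t x => by rw [hbM, waveFlux_inv]
  subst hf₀
  have wave (x : ℝ) (hx : 0 < x) := stmt_14_general
    (fun u => (hF₀.differentiable two_ne_zero u).hasDerivAt) hF₀.differentiable_deriv_two
    (√3)⁻¹ hx.ne'
  simp only [inv_pow, Real.sq_sqrt zero_le_three, ← div_eq_mul_inv, ← div_eq_inv_mul, div_div]
    at wave
  exact ⟨fun t _ x hx => (wave x hx).1 t, fun x hx =>
    ⟨(wave x hx).2.1.mono_left nhdsWithin_le_nhds, (wave x hx).2.2.mono_left nhdsWithin_le_nhds⟩⟩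
end

section
/- Let a₀, b₀ : ℝ → ℝ be C¹ functions with a₀ even and b₀ odd, and define A₀(x) = ∫₀ˣ u·a₀(u) du, B₀(x) = ∫₀ˣ b₀(u) du. With s₊ = x + t/√3, s₋ = x − t/√3, define for t > 0, x > 0: a(t,x) = (1/(2x))·[s₊·a₀(s₊) + s₋·a₀(s₋)] − (√3/(2x))·[s₊·b₀(s₊) + B₀(s₊)] + (√3/(2x))·[s₋·b₀(s₋) + B₀(s₋)], and b(t,x) = −(1/(2√3·x))·[s₊·a₀(s₊) − A₀(s₊)/x] + (1/(2√3·x))·[s₋·a₀(s₋) − A₀(s₋)/x] + (1/(2x))·[s₊·b₀(s₊) − (t/(√3·x))·B₀(s₊)] + (1/(2x))·[s₋·b₀(s₋) + (t/(√3·x))·B₀(s₋)]. Then a, b satisfy the linearized system ∂/∂t (x²·a) + ∂/∂x (x²·b) = 0 and ∂/∂t (x²·b) + ∂/∂x ((x²/3)·a) = (2x/3)·a for all t > 0, x > 0, and for each x > 0 one has a(t,x) → a₀(x) and b(t,x) → b₀(x) as t ↓ 0. -/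
open Filter

/-!
The system is the wave equation in disguise. If `φ` satisfies `r² φₜₜ = φₓₓ`, then
`a = -r² φₜ / x` and `b = φₓ / x - φ / x²` solve it: the first equation is the wave equation, and
in the second the mixed derivatives of `φ` cancel. The explicit formulas come from the d'Alembert
solution `φ` with initial position `x B₀(x)` and initial velocity `-x a₀(x) / r²`.
-/

/-- Classical solutions at `(t, x)` of the linearized radial Euler system with sound speed `1 / r`,
for the density `a` and the flux `b`. The ultra-relativistic system is the case `r = √3`; the
reciprocal `r` of the speed is the parameter so that characteristics read `x ± t / r`. -/
structure IsRadialEulerSolutionAt (r : ℝ) (a b : ℝ → ℝ → ℝ) (t x : ℝ) : Prop where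
  differentiableAt_density_time : DifferentiableAt ℝ (fun s => x ^ 2 * a s x) t
  differentiableAt_flux_space : DifferentiableAt ℝ (fun y => y ^ 2 * b t y) x
  differentiableAt_flux_time : DifferentiableAt ℝ (fun s => x ^ 2 * b s x) t
  differentiableAt_density_space : DifferentiableAt ℝ (fun y => y ^ 2 / r ^ 2 * a t y) x
  density_eq : deriv (fun s => x ^ 2 * a s x) t + deriv (fun y => y ^ 2 * b t y) x = 0
  flux_eq : deriv (fun s => x ^ 2 * b s x) t + deriv (fun y => y ^ 2 / r ^ 2 * a t y) x
    = 2 * x / r ^ 2 * a t x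

/-- The superposition of a wave of profile `f` travelling left and a wave of profile `g` travelling
right, both with speed `1 / r`: d'Alembert's solution of the wave equation. -/
noncomputable def dAlembert (r : ℝ) (f g : ℝ → ℝ) (t x : ℝ) : ℝ :=
  f (x + t / r) + g (x - t / r)

/-- The profile of the wave moving with velocity `1 / r` in the d'Alembert potential of the data
with primitives `A` and `B`. The left-moving profile is obtained by replacing `r` by `-r`. -/
noncomputable def potentialProfile (r : ℝ) (A B : ℝ → ℝ) (y : ℝ) : ℝ :=
  (y * B y + A y / r) / 2

/-- The derivative of `potentialProfile r A B` when `A'(y) = y a(y)` and `B' = b`. -/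
noncomputable def potentialSlope (r : ℝ) (a b B : ℝ → ℝ) (y : ℝ) : ℝ :=
  (B y + y * b y + y * a y / r) / 2

/-- The explicit density `a` of the theorem, with `r` in place of `√3`. -/
noncomputable def radialDensity (r : ℝ) (a₀ b₀ B₀ : ℝ → ℝ) (t x : ℝ) : ℝ :=
  1 / (2 * x) * ((x + t / r) * a₀ (x + t / r) + (x - t / r) * a₀ (x - t / r))
    - r / (2 * x) * ((x + t / r) * b₀ (x + t / r) + B₀ (x + t / r))
    + r / (2 * x) * ((x - t / r) * b₀ (x - t / r) + B₀ (x - t / r))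

/-- The explicit flux `b` of the theorem, with `r` in place of `√3`. -/
noncomputable def radialFlux (r : ℝ) (a₀ b₀ A₀ B₀ : ℝ → ℝ) (t x : ℝ) : ℝ :=
  -(1 / (2 * r * x)) * ((x + t / r) * a₀ (x + t / r) - A₀ (x + t / r) / x)
    + 1 / (2 * r * x) * ((x - t / r) * a₀ (x - t / r) - A₀ (x - t / r) / x)
    + 1 / (2 * x) * ((x + t / r) * b₀ (x + t / r) - t / (r * x) * B₀ (x + t / r))
    + 1 / (2 * x) * ((x - t / r) * b₀ (x - t / r) + t / (r * x) * B₀ (x - t / r))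

theorem IsRadialEulerSolutionAt.of_wave_potential {r t x φₜₓ φₜₜ : ℝ} {φ φₜ φₓ : ℝ → ℝ → ℝ}
    (hr : r ≠ 0) (hx : x ≠ 0)
    (hφₜ : HasDerivAt (fun s => φ s x) (φₜ t x) t)
    (hφₓ : HasDerivAt (φ t) (φₓ t x) x)
    (hφₜₜ : HasDerivAt (fun s => φₜ s x) φₜₜ t)
    (hφₜₓ : HasDerivAt (φₜ t) φₜₓ x)
    (hφₓₜ : HasDerivAt (fun s => φₓ s x) φₜₓ t)
    (hφₓₓ : HasDerivAt (φₓ t) (r ^ 2 * φₜₜ) x) :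
    IsRadialEulerSolutionAt r (fun s y => -(r ^ 2 * φₜ s y) / y)
      (fun s y => φₓ s y / y - φ s y / y ^ 2) t x := by
  have sq_mul_flux {s y : ℝ} (hy : y ≠ 0) :
      y ^ 2 * (φₓ s y / y - φ s y / y ^ 2) = y * φₓ s y - φ s y := by
    field_simp
  have density_time :
      HasDerivAt (fun s => x ^ 2 * (-(r ^ 2 * φₜ s x) / x)) (-(x * r ^ 2 * φₜₜ)) t := by
    refine (hφₜₜ.const_mul (-(x * r ^ 2))).congr_deriv (by ring) |>.congr_of_eventuallyEq
      (.of_forall fun s => ?_)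
    field_simp
  have flux_space :
      HasDerivAt (fun y => y ^ 2 * (φₓ t y / y - φ t y / y ^ 2)) (x * r ^ 2 * φₜₜ) x :=
    (((hasDerivAt_id' x).fun_mul hφₓₓ).fun_sub hφₓ).congr_deriv (by ring)
      |>.congr_of_eventuallyEq ((eventually_ne_nhds hx).mono fun _ hy => sq_mul_flux hy)
  have flux_time :
      HasDerivAt (fun s => x ^ 2 * (φₓ s x / x - φ s x / x ^ 2)) (x * φₜₓ - φₜ t x) t :=
    ((hφₓₜ.const_mul x).fun_sub hφₜ).congr_of_eventuallyEq (.of_forall fun _ => sq_mul_flux hx)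
  have density_space :
      HasDerivAt (fun y => y ^ 2 / r ^ 2 * (-(r ^ 2 * φₜ t y) / y)) (-(φₜ t x + x * φₜₓ)) x := by
    refine ((hasDerivAt_id' x).fun_mul hφₜₓ).fun_neg.congr_deriv (by ring)
      |>.congr_of_eventuallyEq ((eventually_ne_nhds hx).mono fun y hy => ?_)
    field_simp
  refine ⟨density_time.differentiableAt, flux_space.differentiableAt,
    flux_time.differentiableAt, density_space.differentiableAt, ?_, ?_⟩
  · rw [density_time.deriv, flux_space.deriv]
    ring
  · rw [flux_time.deriv, density_space.deriv]
    field_simp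
    ring

section DAlembert

variable {r t x : ℝ} {f g f' g' : ℝ → ℝ}

theorem hasDerivAt_dAlembert_space (hf : ∀ y, HasDerivAt f (f' y) y)
    (hg : ∀ y, HasDerivAt g (g' y) y) :
    HasDerivAt (dAlembert r f g t) (dAlembert r f' g' t x) x :=
  ((hf _).comp_add_const x (t / r)).fun_add ((hg _).comp_sub_const x (t / r))

theorem hasDerivAt_dAlembert_time (hf : ∀ y, HasDerivAt f (f' y) y)
    (hg : ∀ y, HasDerivAt g (g' y) y) :
    HasDerivAt (fun s => dAlembert r f g s x) (dAlembert r f' (-g') t x / r) t := by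
  have hs : HasDerivAt (fun s => s / r) (1 / r) t := (hasDerivAt_id' t).div_const r
  refine (((hf _).comp t (hs.const_add x)).fun_add
    ((hg _).comp t (hs.const_sub x))).congr_deriv ?_
  simp only [dAlembert, Pi.neg_apply]
  ring

theorem tendsto_dAlembert_zero (hf : ContinuousAt f x) (hg : ContinuousAt g x) :
    Tendsto (fun s => dAlembert r f g s x) (nhds 0) (nhds (f x + g x)) := by
  have hleft : Tendsto (fun s => x + s / r) (nhds 0) (nhds x) :=
    Continuous.tendsto' (by fun_prop) _ _ (by simp)
  have hright : Tendsto (fun s => x - s / r) (nhds 0) (nhds x) :=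
    Continuous.tendsto' (by fun_prop) _ _ (by simp)
  exact (hf.tendsto.comp hleft).add (hg.tendsto.comp hright)

theorem IsRadialEulerSolutionAt.of_dAlembert (hr : r ≠ 0) (hx : x ≠ 0)
    (hf : ∀ y, HasDerivAt f (f' y) y) (hg : ∀ y, HasDerivAt g (g' y) y)
    (hf' : Differentiable ℝ f') (hg' : Differentiable ℝ g') :
    IsRadialEulerSolutionAt r (fun s y => -(r ^ 2 * (dAlembert r f' (-g') s y / r)) / y)
      (fun s y => dAlembert r f' g' s y / y - dAlembert r f g s y / y ^ 2) t x := by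
  have hf'' (y : ℝ) : HasDerivAt f' (deriv f' y) y := (hf' y).hasDerivAt
  have hg'' (y : ℝ) : HasDerivAt g' (deriv g' y) y := (hg' y).hasDerivAt
  have hg''_neg (y : ℝ) : HasDerivAt (-g') ((-deriv g') y) y := (hg'' y).neg
  refine .of_wave_potential (φₜ := fun s y => dAlembert r f' (-g') s y / r) hr hx
    (hasDerivAt_dAlembert_time hf hg) (hasDerivAt_dAlembert_space hf hg)
    ((hasDerivAt_dAlembert_time hf'' hg''_neg).div_const r)
    ((hasDerivAt_dAlembert_space hf'' hg''_neg).div_const r)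
    (hasDerivAt_dAlembert_time hf'' hg'')
    ((hasDerivAt_dAlembert_space hf'' hg'').congr_deriv ?_)
  rw [neg_neg]
  field_simp

end DAlembert

section ExplicitSolution

variable {r x : ℝ} {a₀ b₀ A₀ B₀ : ℝ → ℝ}

theorem hasDerivAt_potentialProfile (hA₀ : HasDerivAt A₀ (x * a₀ x) x)
    (hB₀ : HasDerivAt B₀ (b₀ x) x) :
    HasDerivAt (potentialProfile r A₀ B₀) (potentialSlope r a₀ b₀ B₀ x) x :=
  ((((hasDerivAt_id' x).fun_mul hB₀).fun_add (hA₀.div_const r)).div_const 2).congr_deriv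
    (by simp only [potentialSlope, one_mul])

theorem differentiable_potentialSlope (ha₀ : Differentiable ℝ a₀) (hb₀ : Differentiable ℝ b₀)
    (hB₀ : Differentiable ℝ B₀) : Differentiable ℝ (potentialSlope r a₀ b₀ B₀) := by
  unfold potentialSlope
  fun_prop

theorem continuousAt_potentialSlope (ha₀ : ContinuousAt a₀ x) (hb₀ : ContinuousAt b₀ x)
    (hB₀ : ContinuousAt B₀ x) : ContinuousAt (potentialSlope r a₀ b₀ B₀) x := by
  unfold potentialSlope
  fun_prop

theorem radialDensity_eq_dAlembert (hr : r ≠ 0) (t x : ℝ) :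
    radialDensity r a₀ b₀ B₀ t x =
      -(r ^ 2 * (dAlembert r (potentialSlope (-r) a₀ b₀ B₀) (-potentialSlope r a₀ b₀ B₀) t x / r))
        / x := by
  simp only [radialDensity, dAlembert, potentialSlope, Pi.neg_apply]
  generalize x + t / r = p, x - t / r = q
  field_simp
  ring

theorem radialFlux_eq_dAlembert (r t x : ℝ) :
    radialFlux r a₀ b₀ A₀ B₀ t x =
      dAlembert r (potentialSlope (-r) a₀ b₀ B₀) (potentialSlope r a₀ b₀ B₀) t x / x
        - dAlembert r (potentialProfile (-r) A₀ B₀) (potentialProfile r A₀ B₀) t x / x ^ 2 := by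
  obtain rfl | hx := eq_or_ne x 0
  · simp [radialFlux]
  simp only [radialFlux, dAlembert, potentialSlope, potentialProfile]
  generalize A₀ (x + t / r) = A₁, A₀ (x - t / r) = A₂, B₀ (x + t / r) = B₁, B₀ (x - t / r) = B₂,
    a₀ (x + t / r) = a₁, a₀ (x - t / r) = a₂, b₀ (x + t / r) = b₁, b₀ (x - t / r) = b₂
  field_simp
  ring

theorem isRadialEulerSolutionAt_explicit (hr : r ≠ 0) (hx : x ≠ 0) (t : ℝ)
    (ha₀ : Differentiable ℝ a₀) (hb₀ : Differentiable ℝ b₀)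
    (hA₀ : ∀ y, HasDerivAt A₀ (y * a₀ y) y) (hB₀ : ∀ y, HasDerivAt B₀ (b₀ y) y) :
    IsRadialEulerSolutionAt r (radialDensity r a₀ b₀ B₀) (radialFlux r a₀ b₀ A₀ B₀) t x := by
  have hslope (ρ : ℝ) : Differentiable ℝ (potentialSlope ρ a₀ b₀ B₀) :=
    differentiable_potentialSlope ha₀ hb₀ fun y => (hB₀ y).differentiableAt
  rw [funext₂ (radialDensity_eq_dAlembert hr), funext₂ (radialFlux_eq_dAlembert r)]
  exact .of_dAlembert hr hx (fun y => hasDerivAt_potentialProfile (hA₀ y) (hB₀ y))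
    (fun y => hasDerivAt_potentialProfile (hA₀ y) (hB₀ y)) (hslope (-r)) (hslope r)

theorem tendsto_radialDensity_zero (hr : r ≠ 0) (hx : x ≠ 0) (ha₀ : ContinuousAt a₀ x)
    (hb₀ : ContinuousAt b₀ x) (hB₀ : ContinuousAt B₀ x) :
    Tendsto (fun t => radialDensity r a₀ b₀ B₀ t x) (nhds 0) (nhds (a₀ x)) := by
  have hslope (ρ : ℝ) : ContinuousAt (potentialSlope ρ a₀ b₀ B₀) x :=
    continuousAt_potentialSlope ha₀ hb₀ hB₀
  simp only [radialDensity_eq_dAlembert hr]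
  convert ((((tendsto_dAlembert_zero (hslope (-r)) (hslope r).neg).div_const r).const_mul
    (r ^ 2)).neg.div_const x) using 2
  simp only [potentialSlope, Pi.neg_apply]
  field_simp
  ring

theorem tendsto_radialFlux_zero (hx : x ≠ 0) (ha₀ : ContinuousAt a₀ x)
    (hb₀ : ContinuousAt b₀ x) (hA₀ : ContinuousAt A₀ x) (hB₀ : ContinuousAt B₀ x) :
    Tendsto (fun t => radialFlux r a₀ b₀ A₀ B₀ t x) (nhds 0) (nhds (b₀ x)) := by
  have hslope (ρ : ℝ) : ContinuousAt (potentialSlope ρ a₀ b₀ B₀) x :=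
    continuousAt_potentialSlope ha₀ hb₀ hB₀
  have hprofile (ρ : ℝ) : ContinuousAt (potentialProfile ρ A₀ B₀) x := by
    unfold potentialProfile
    fun_prop
  simp only [radialFlux_eq_dAlembert]
  convert ((tendsto_dAlembert_zero (hslope (-r)) (hslope r)).div_const x).sub
    ((tendsto_dAlembert_zero (hprofile (-r)) (hprofile r)).div_const (x ^ 2)) using 2
  simp only [potentialSlope, potentialProfile]
  field_simp
  ring

theorem stmt_15_general (hr : r ≠ 0) (ha₀ : Differentiable ℝ a₀) (hb₀ : Differentiable ℝ b₀)
    (hA₀ : ∀ y, HasDerivAt A₀ (y * a₀ y) y) (hB₀ : ∀ y, HasDerivAt B₀ (b₀ y) y) (hx : x ≠ 0) :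
    (∀ t, IsRadialEulerSolutionAt r (radialDensity r a₀ b₀ B₀) (radialFlux r a₀ b₀ A₀ B₀) t x) ∧
      Tendsto (fun t => radialDensity r a₀ b₀ B₀ t x) (nhds 0) (nhds (a₀ x)) ∧
      Tendsto (fun t => radialFlux r a₀ b₀ A₀ B₀ t x) (nhds 0) (nhds (b₀ x)) := by
  have ca := ha₀.continuous.continuousAt (x := x)
  have cb := hb₀.continuous.continuousAt (x := x)
  exact ⟨fun t => isRadialEulerSolutionAt_explicit hr hx t ha₀ hb₀ hA₀ hB₀,
    tendsto_radialDensity_zero hr hx ca cb (hB₀ x).continuousAt,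
    tendsto_radialFlux_zero hx ca cb (hA₀ x).continuousAt (hB₀ x).continuousAt⟩

end ExplicitSolution

/-- Theorem 3.1: the explicit formulas built from even/odd `C¹` data `a₀, b₀` and their
primitives `A₀(x) = ∫₀ˣ u a₀(u) du`, `B₀(x) = ∫₀ˣ b₀(u) du` solve the linearized
radially symmetric system on the quarter plane `t > 0, x > 0` and attain the initial
data `a₀, b₀` as `t ↓ 0`. -/
theorem stmt_15 (a₀ b₀ : ℝ → ℝ) (ha₀ : ContDiff ℝ 1 a₀) (hb₀ : ContDiff ℝ 1 b₀)
    (heven : ∀ x, a₀ (-x) = a₀ x) (hodd : ∀ x, b₀ (-x) = -b₀ x)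
    (A₀ B₀ : ℝ → ℝ)
    (hA₀ : ∀ x, A₀ x = ∫ u in (0 : ℝ)..x, u * a₀ u)
    (hB₀ : ∀ x, B₀ x = ∫ u in (0 : ℝ)..x, b₀ u)
    (a b : ℝ → ℝ → ℝ)
    (ha : ∀ t x, a t x =
      1 / (2 * x) * ((x + t / Real.sqrt 3) * a₀ (x + t / Real.sqrt 3)
        + (x - t / Real.sqrt 3) * a₀ (x - t / Real.sqrt 3))
      - Real.sqrt 3 / (2 * x) * ((x + t / Real.sqrt 3) * b₀ (x + t / Real.sqrt 3)
        + B₀ (x + t / Real.sqrt 3))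
      + Real.sqrt 3 / (2 * x) * ((x - t / Real.sqrt 3) * b₀ (x - t / Real.sqrt 3)
        + B₀ (x - t / Real.sqrt 3)))
    (hb : ∀ t x, b t x =
      -(1 / (2 * Real.sqrt 3 * x)) * ((x + t / Real.sqrt 3) * a₀ (x + t / Real.sqrt 3)
        - A₀ (x + t / Real.sqrt 3) / x)
      + 1 / (2 * Real.sqrt 3 * x) * ((x - t / Real.sqrt 3) * a₀ (x - t / Real.sqrt 3)
        - A₀ (x - t / Real.sqrt 3) / x)
      + 1 / (2 * x) * ((x + t / Real.sqrt 3) * b₀ (x + t / Real.sqrt 3)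
        - t / (Real.sqrt 3 * x) * B₀ (x + t / Real.sqrt 3))
      + 1 / (2 * x) * ((x - t / Real.sqrt 3) * b₀ (x - t / Real.sqrt 3)
        + t / (Real.sqrt 3 * x) * B₀ (x - t / Real.sqrt 3))) :
    (∀ t > (0 : ℝ), ∀ x > (0 : ℝ),
      deriv (fun s => x ^ 2 * a s x) t + deriv (fun y => y ^ 2 * b t y) x = 0 ∧
      deriv (fun s => x ^ 2 * b s x) t + deriv (fun y => y ^ 2 / 3 * a t y) x
        = 2 * x / 3 * a t x) ∧
    (∀ x > (0 : ℝ),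
      Tendsto (fun t => a t x) (nhdsWithin 0 (Set.Ioi 0)) (nhds (a₀ x)) ∧
      Tendsto (fun t => b t x) (nhdsWithin 0 (Set.Ioi 0)) (nhds (b₀ x))) := by
  obtain rfl : a = radialDensity √3 a₀ b₀ B₀ := funext₂ ha
  obtain rfl : b = radialFlux √3 a₀ b₀ A₀ B₀ := funext₂ hb
  have cA : Continuous fun u => u * a₀ u := continuous_id.mul ha₀.continuous
  have dA (y : ℝ) : HasDerivAt A₀ (y * a₀ y) y :=
    funext hA₀ ▸ (cA.integral_hasStrictDerivAt 0 y).hasDerivAt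
  have dB (y : ℝ) : HasDerivAt B₀ (b₀ y) y :=
    funext hB₀ ▸ (hb₀.continuous.integral_hasStrictDerivAt 0 y).hasDerivAt
  have sqrt_three_sq : √(3 : ℝ) ^ 2 = 3 := Real.sq_sqrt (by norm_num)
  have solves (x : ℝ) (hx : x > 0) := stmt_15_general (r := √3) (by positivity)
    (ha₀.differentiable one_ne_zero) (hb₀.differentiable one_ne_zero) dA dB hx.ne'
  refine ⟨fun t _ x hx => ?_, fun x hx => ?_⟩
  · obtain ⟨solution, -⟩ := solves x hx
    exact ⟨(solution t).density_eq, by simpa only [sqrt_three_sq] using (solution t).flux_eq⟩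
  · obtain ⟨-, density_lim, flux_lim⟩ := solves x hx
    exact ⟨density_lim.mono_left nhdsWithin_le_nhds, flux_lim.mono_left nhdsWithin_le_nhds⟩
end

section
/- Let a₀, b₀ : ℝ → ℝ be C² functions with a₀ even and b₀ odd, and let b(t,x) be given by the explicit solution formula of the linearized radially symmetric system with data a₀, b₀. Then for every t > 0, b(t,x) tends to 0 as x ↓ 0. -/
open Filter

/-!
With `c = t / √3`, evenness of `a₀` and oddness of `b₀` turn the formula for `b(t, x)` into a
combination of `E / x²`, where `E` is the error of the trapezoidal rule on `[c - x, c + x]` for the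
odd functions `u ↦ u * a₀ u` and `b₀`, and of `b₀ (x + c) + b₀ (x - c)`. The trapezoidal rule is
exact on affine functions, so differentiability of the integrand at `c` already gives `E = o(x²)`;
the last term tends to `b₀ c + b₀ (-c) = 0`.
-/

open MeasureTheory Topology Asymptotics
open scoped Interval

theorem trapezoidal_error_one_sub_affine {f : ℝ → ℝ} {a b : ℝ}
    (hf : IntervalIntegrable f volume a b) (p q c : ℝ) :
    trapezoidal_error (fun u => f u - p - (u - c) * q) 1 a b = trapezoidal_error f 1 a b := by
  have h_affine : ∫ u in a..b, (p + (u - c) * q) =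
      (b - a) / 2 * ((p + (a - c) * q) + (p + (b - c) * q)) := by
    have h_linear : IntervalIntegrable (fun u => (u - c) * q) volume a b :=
      Continuous.intervalIntegrable (by fun_prop) a b
    rw [intervalIntegral.integral_add intervalIntegrable_const h_linear,
      intervalIntegral.integral_mul_const,
      intervalIntegral.integral_comp_sub_right (fun u => u), integral_id,
      intervalIntegral.integral_const, smul_eq_mul]
    ring
  simp only [trapezoidal_error, trapezoidal_integral_one, sub_sub]
  rw [intervalIntegral.integral_sub hf (Continuous.intervalIntegrable (by fun_prop) a b), h_affine]
  ring

theorem abs_trapezoidal_error_one_le {f : ℝ → ℝ} {a b C : ℝ} (hC : ∀ u ∈ [[a, b]], |f u| ≤ C) :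
    |trapezoidal_error f 1 a b| ≤ 2 * C * |b - a| := by
  have h_rule : |(b - a) / 2 * (f a + f b)| ≤ |b - a| / 2 * (C + C) := by
    rw [abs_mul, abs_div, abs_two]
    gcongr
    exact (abs_add_le _ _).trans (add_le_add (hC a Set.left_mem_uIcc) (hC b Set.right_mem_uIcc))
  have h_integral : |∫ u in a..b, f u| ≤ C * |b - a| :=
    intervalIntegral.norm_integral_le_of_norm_le_const (f := f)
      fun u hu => hC u (Set.uIoc_subset_uIcc hu)
  calc |trapezoidal_error f 1 a b|
      ≤ |(b - a) / 2 * (f a + f b)| + |∫ u in a..b, f u| := by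
        rw [trapezoidal_error, trapezoidal_integral_one]
        exact abs_sub _ _
    _ ≤ |b - a| / 2 * (C + C) + C * |b - a| := add_le_add h_rule h_integral
    _ = 2 * C * |b - a| := by ring

theorem trapezoidal_error_one_isLittleO {f : ℝ → ℝ} {c : ℝ} (hf : IntegrableAtFilter f (𝓝 c))
    (hf' : DifferentiableAt ℝ f c) :
    (fun h => trapezoidal_error f 1 (c - h) (c + h)) =o[𝓝 0] fun h => h ^ 2 := by
  have h_uIcc : Tendsto (fun h : ℝ => [[c - h, c + h]]) (𝓝 0) (𝓝 c).smallSets :=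
    Tendsto.uIcc (Continuous.tendsto' (by fun_prop) _ _ (sub_zero c))
      (Continuous.tendsto' (by fun_prop) _ _ (add_zero c))
  refine IsLittleO.of_bound fun ε hε => ?_
  have h_remainder : ∀ᶠ u in 𝓝 c, |f u - f c - (u - c) * deriv f c| ≤ ε / 4 * |u - c| :=
    (hasDerivAt_iff_isLittleO.mp hf'.hasDerivAt).bound (by positivity)
  filter_upwards [h_uIcc.eventually hf.eventually, h_uIcc.eventually h_remainder.smallSets]
    with h h_int h_le
  have h_bound : ∀ u ∈ [[c - h, c + h]], |f u - f c - (u - c) * deriv f c| ≤ ε / 4 * |h| := by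
    intro u hu
    have h_dist : |u - c| ≤ |h| := by grind [Set.mem_uIcc]
    exact (h_le u hu).trans (by gcongr)
  calc |trapezoidal_error f 1 (c - h) (c + h)|
      = |trapezoidal_error (fun u => f u - f c - (u - c) * deriv f c) 1 (c - h) (c + h)| := by
        rw [trapezoidal_error_one_sub_affine h_int.intervalIntegrable]
    _ ≤ 2 * (ε / 4 * |h|) * |(c + h) - (c - h)| := abs_trapezoidal_error_one_le h_bound
    _ = ε * ‖h ^ 2‖ := by
        rw [add_sub_sub_cancel, ← two_mul, abs_mul, abs_two, Real.norm_eq_abs, abs_pow]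
        ring

theorem intervalIntegral_zero_neg_of_odd {E : Type*} [NormedAddCommGroup E] [NormedSpace ℝ E]
    {f : ℝ → E} (hodd : Function.Odd f) (x : ℝ) :
    ∫ u in 0..-x, f u = ∫ u in 0..x, f u := by
  have h := intervalIntegral.integral_comp_neg (a := 0) (b := x) f
  simp only [hodd _, intervalIntegral.integral_neg, neg_zero] at h
  rw [intervalIntegral.integral_symm, ← h, neg_neg]

theorem trapezoidal_error_one_eq_of_odd {f : ℝ → ℝ} (hf : LocallyIntegrable f)
    (hodd : Function.Odd f) (c x : ℝ) :
    trapezoidal_error f 1 (c - x) (c + x) =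
      x * (f (x + c) - f (x - c)) - ((∫ u in 0..x + c, f u) - ∫ u in 0..x - c, f u) := by
  have h_reflect : ∫ u in 0..c - x, f u = ∫ u in 0..x - c, f u := by
    rw [← neg_sub x c, intervalIntegral_zero_neg_of_odd hodd]
  have h_int (a b : ℝ) : IntervalIntegrable f volume a b :=
    (hf.integrableOn_isCompact isCompact_uIcc).intervalIntegrable
  rw [trapezoidal_error, trapezoidal_integral_one,
    ← intervalIntegral.integral_interval_sub_left (h_int 0 _) (h_int 0 _), h_reflect,
    ← neg_sub x c, hodd, add_comm c x]
  ring

theorem tendsto_apply_add_add_apply_sub_of_odd {G E : Type*} [AddCommGroup G] [TopologicalSpace G]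
    [IsTopologicalAddGroup G] [AddCommGroup E] [TopologicalSpace E] [IsTopologicalAddGroup E]
    {f : G → E} (hodd : Function.Odd f) {c : G} (hf : ContinuousAt f c) :
    Tendsto (fun x => f (x + c) + f (x - c)) (𝓝 0) (𝓝 0) := by
  have h_add : Tendsto (fun x => f (x + c)) (𝓝 0) (𝓝 (f c)) :=
    hf.tendsto.comp (Continuous.tendsto' (by fun_prop) _ _ (zero_add c))
  have h_sub : Tendsto (fun x => f (c - x)) (𝓝 0) (𝓝 (f c)) :=
    hf.tendsto.comp (Continuous.tendsto' (by fun_prop) _ _ (sub_zero c))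
  refine (sub_self (f c) ▸ h_add.sub h_sub).congr fun x => ?_
  rw [← neg_sub x c, hodd, sub_neg_eq_add]

theorem stmt_16_general (a₀ b₀ : ℝ → ℝ) (ha₀ : LocallyIntegrable a₀) (hb₀ : LocallyIntegrable b₀)
    (heven : Function.Even a₀) (hodd : Function.Odd b₀)
    (A₀ B₀ : ℝ → ℝ)
    (hA₀ : ∀ x, A₀ x = ∫ u in (0 : ℝ)..x, u * a₀ u)
    (hB₀ : ∀ x, B₀ x = ∫ u in (0 : ℝ)..x, b₀ u)
    (b : ℝ → ℝ → ℝ)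
    (hb : ∀ t x, b t x =
      -(1 / (2 * Real.sqrt 3 * x)) * ((x + t / Real.sqrt 3) * a₀ (x + t / Real.sqrt 3)
        - A₀ (x + t / Real.sqrt 3) / x)
      + 1 / (2 * Real.sqrt 3 * x) * ((x - t / Real.sqrt 3) * a₀ (x - t / Real.sqrt 3)
        - A₀ (x - t / Real.sqrt 3) / x)
      + 1 / (2 * x) * ((x + t / Real.sqrt 3) * b₀ (x + t / Real.sqrt 3)
        - t / (Real.sqrt 3 * x) * B₀ (x + t / Real.sqrt 3))
      + 1 / (2 * x) * ((x - t / Real.sqrt 3) * b₀ (x - t / Real.sqrt 3)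
        + t / (Real.sqrt 3 * x) * B₀ (x - t / Real.sqrt 3)))
    (t : ℝ) (ha₀' : DifferentiableAt ℝ a₀ (t / Real.sqrt 3))
    (hb₀' : DifferentiableAt ℝ b₀ (t / Real.sqrt 3)) :
    Tendsto (fun x => b t x) (𝓝[≠] 0) (𝓝 0) := by
  set f : ℝ → ℝ := fun u => u * a₀ u
  set c := t / Real.sqrt 3 with hc
  have hf : LocallyIntegrable f := ha₀.continuous_mul continuous_id
  have hf_odd : Function.Odd f := Function.Odd.mul_even (fun _ => rfl) heven
  have hb_eq : ∀ x ≠ 0, b t x =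
      -(1 / (2 * Real.sqrt 3)) * (trapezoidal_error f 1 (c - x) (c + x) / x ^ 2)
        + 1 / 2 * (c * (trapezoidal_error b₀ 1 (c - x) (c + x) / x ^ 2)
          + (b₀ (x + c) + b₀ (x - c))) := by
    intro x hx
    have hcx : t / (Real.sqrt 3 * x) = c / x := by rw [hc, div_div]
    rw [trapezoidal_error_one_eq_of_odd hf hf_odd, trapezoidal_error_one_eq_of_odd hb₀ hodd,
      ← hA₀, ← hA₀, ← hB₀, ← hB₀, hb, hcx, ← hc]
    simp only [f]
    clear_value c
    field_simp
    ring
  have hA_error := (trapezoidal_error_one_isLittleO (hf c)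
    (differentiableAt_id.mul ha₀')).tendsto_div_nhds_zero
  have hB_error := (trapezoidal_error_one_isLittleO (hb₀ c) hb₀').tendsto_div_nhds_zero
  have hb₀_sum := tendsto_apply_add_add_apply_sub_of_odd hodd hb₀'.continuousAt
  have hlim := (hA_error.const_mul (-(1 / (2 * Real.sqrt 3)))).add
    (((hB_error.const_mul c).add hb₀_sum).const_mul (1 / 2))
  simp only [mul_zero, add_zero] at hlim
  refine (hlim.mono_left nhdsWithin_le_nhds).congr' ?_
  filter_upwards [self_mem_nhdsWithin] with x hx using (hb_eq x hx).symm

/-- Theorem 3.3: for even/odd `C²` data `a₀, b₀`, the explicit solution component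
`b(t,x)` of the linearized radially symmetric system satisfies `b(t,x) → 0` as `x ↓ 0`,
for every `t > 0`. -/
theorem stmt_16 (a₀ b₀ : ℝ → ℝ) (ha₀ : ContDiff ℝ 2 a₀) (hb₀ : ContDiff ℝ 2 b₀)
    (heven : ∀ x, a₀ (-x) = a₀ x) (hodd : ∀ x, b₀ (-x) = -b₀ x)
    (A₀ B₀ : ℝ → ℝ)
    (hA₀ : ∀ x, A₀ x = ∫ u in (0 : ℝ)..x, u * a₀ u)
    (hB₀ : ∀ x, B₀ x = ∫ u in (0 : ℝ)..x, b₀ u)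
    (b : ℝ → ℝ → ℝ)
    (hb : ∀ t x, b t x =
      -(1 / (2 * Real.sqrt 3 * x)) * ((x + t / Real.sqrt 3) * a₀ (x + t / Real.sqrt 3)
        - A₀ (x + t / Real.sqrt 3) / x)
      + 1 / (2 * Real.sqrt 3 * x) * ((x - t / Real.sqrt 3) * a₀ (x - t / Real.sqrt 3)
        - A₀ (x - t / Real.sqrt 3) / x)
      + 1 / (2 * x) * ((x + t / Real.sqrt 3) * b₀ (x + t / Real.sqrt 3)
        - t / (Real.sqrt 3 * x) * B₀ (x + t / Real.sqrt 3))
      + 1 / (2 * x) * ((x - t / Real.sqrt 3) * b₀ (x - t / Real.sqrt 3)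
        + t / (Real.sqrt 3 * x) * B₀ (x - t / Real.sqrt 3))) :
    ∀ t > (0 : ℝ), Tendsto (fun x => b t x) (nhdsWithin 0 (Set.Ioi 0)) (nhds 0) := by
  intro t _
  exact (stmt_16_general a₀ b₀ ha₀.continuous.locallyIntegrable hb₀.continuous.locallyIntegrable
    heven hodd A₀ B₀ hA₀ hB₀ b hb t (ha₀.differentiable two_ne_zero).differentiableAt
    (hb₀.differentiable two_ne_zero).differentiableAt).mono_left (nhdsGT_le_nhdsNE 0)
end

section
/- Define a(t,x) = 3/2 + t/(2√3·x) and b(t,x) = (t² − 3(1+x²))/(12√3·x²) for t > 0, x > 0. Then a, b satisfy the linearized radially symmetric system at every point (t,x) with t > 0, x > 0: ∂/∂t (x²·a(t,x)) + ∂/∂x (x²·b(t,x)) = 0 and ∂/∂t (x²·b(t,x)) + ∂/∂x ((x²/3)·a(t,x)) = (2x/3)·a(t,x). -/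
/-!
In the densities `p = x² a` and `q = x² b` the system reads `p_t + q_x = 0` and
`q_t + p_x / 3 = 2 p / (3 x)`. It has the polynomial solutions `p = α x² + κ t x`,
`q = κ (t² - 3 x²) / 6 + γ`, and the fields of `Ω₂` are the member `α = 3/2`, `κ = 1/(2√3)`,
`γ = -1/(4√3)` of this family.
-/

open scoped Topology

section LinearizedRadialEuler

variable {𝕜 : Type*} [NontriviallyNormedField 𝕜]

/-- The linearized radially symmetric ultra-relativistic Euler system for the fields `a`, `b` at
the point `(t, x)`, in the classical sense. Differentiability is included because `deriv` is `0`
where the derivative does not exist. -/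
structure SolvesLinearizedRadialEulerAt (a b : 𝕜 → 𝕜 → 𝕜) (t x : 𝕜) : Prop where
  differentiableAt_a_time : DifferentiableAt 𝕜 (fun s => x ^ 2 * a s x) t
  differentiableAt_b_space : DifferentiableAt 𝕜 (fun y => y ^ 2 * b t y) x
  differentiableAt_b_time : DifferentiableAt 𝕜 (fun s => x ^ 2 * b s x) t
  differentiableAt_a_space : DifferentiableAt 𝕜 (fun y => y ^ 2 / 3 * a t y) x
  conservation : deriv (fun s => x ^ 2 * a s x) t + deriv (fun y => y ^ 2 * b t y) x = 0
  balance : deriv (fun s => x ^ 2 * b s x) t + deriv (fun y => y ^ 2 / 3 * a t y) x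
    = 2 * x / 3 * a t x

theorem SolvesLinearizedRadialEulerAt.of_densities {a b p q : 𝕜 → 𝕜 → 𝕜} {t x pt px qt qx : 𝕜}
    (hx : x ≠ 0) (hp : ∀ s, ∀ y ≠ 0, y ^ 2 * a s y = p s y)
    (hq : ∀ s, ∀ y ≠ 0, y ^ 2 * b s y = q s y)
    (hpt : HasDerivAt (fun s => p s x) pt t) (hpx : HasDerivAt (p t) px x)
    (hqt : HasDerivAt (fun s => q s x) qt t) (hqx : HasDerivAt (q t) qx x)
    (conservation : pt + qx = 0) (balance : qt + px / 3 = 2 * p t x / (3 * x)) :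
    SolvesLinearizedRadialEulerAt a b t x := by
  have near_x : ∀ᶠ y in 𝓝 x, y ≠ 0 := eventually_ne_nhds hx
  have a_time : HasDerivAt (fun s => x ^ 2 * a s x) pt t := by
    simpa only [hp _ x hx] using hpt
  have b_time : HasDerivAt (fun s => x ^ 2 * b s x) qt t := by
    simpa only [hq _ x hx] using hqt
  have b_space : HasDerivAt (fun y => y ^ 2 * b t y) qx x :=
    hqx.congr_of_eventuallyEq (near_x.mono (hq t))
  have a_space : HasDerivAt (fun y => y ^ 2 / 3 * a t y) (px / 3) x :=
    (hpx.div_const 3).congr_of_eventuallyEq <| near_x.mono fun y hy => by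
      simp only [← hp t y hy, div_mul_eq_mul_div]
  refine ⟨a_time.differentiableAt, b_space.differentiableAt, b_time.differentiableAt,
    a_space.differentiableAt, ?_, ?_⟩
  · rw [a_time.deriv, b_space.deriv, conservation]
  · rw [b_time.deriv, a_space.deriv, balance, ← hp t x hx]
    field_simp

theorem stmt_17_general [CharZero 𝕜] {a b : 𝕜 → 𝕜 → 𝕜} (α κ γ : 𝕜)
    (ha : ∀ t x, a t x = α + κ * t / x)
    (hb : ∀ t x, b t x = (κ * (t ^ 2 - 3 * x ^ 2) / 6 + γ) / x ^ 2) (t : 𝕜) {x : 𝕜} (hx : x ≠ 0) :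
    SolvesLinearizedRadialEulerAt a b t x := by
  have a_density (s y : 𝕜) (hy : y ≠ 0) : y ^ 2 * a s y = α * y ^ 2 + κ * s * y := by
    rw [ha]
    field_simp
  have b_density (s y : 𝕜) (hy : y ≠ 0) :
      y ^ 2 * b s y = κ * (s ^ 2 - 3 * y ^ 2) / 6 + γ := by
    rw [hb, mul_div_cancel₀ _ (pow_ne_zero 2 hy)]
  have a_time : HasDerivAt (fun s => α * x ^ 2 + κ * s * x) (κ * x) t := by
    simpa using (((hasDerivAt_id t).const_mul κ).mul_const x).const_add (α * x ^ 2)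
  have a_space : HasDerivAt (fun y => α * y ^ 2 + κ * t * y) (2 * α * x + κ * t) x := by
    refine (((hasDerivAt_pow 2 x).const_mul α).add
      ((hasDerivAt_id' x).const_mul (κ * t))).congr_deriv ?_
    norm_num
    ring
  have b_time : HasDerivAt (fun s => κ * (s ^ 2 - 3 * x ^ 2) / 6 + γ) (κ * t / 3) t := by
    refine (((((hasDerivAt_pow 2 t).sub_const (3 * x ^ 2)).const_mul κ).div_const
      6).add_const γ).congr_deriv ?_
    norm_num
    ring
  have b_space : HasDerivAt (fun y => κ * (t ^ 2 - 3 * y ^ 2) / 6 + γ) (-(κ * x)) x := by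
    refine ((((((hasDerivAt_pow 2 x).const_mul 3).const_sub (t ^ 2)).const_mul κ).div_const
      6).add_const γ).congr_deriv ?_
    norm_num
    ring
  refine .of_densities hx a_density b_density a_time a_space b_time b_space
    (add_neg_cancel _) ?_
  field_simp
  ring

end LinearizedRadialEuler

/-- The fields `a(t,x) = 3/2 + t/(2√3 x)` and `b(t,x) = (t² − 3(1+x²))/(12√3 x²)` of the
region `Ω₂` in the imploding-shock example satisfy the linearized radially symmetric
system at every point `(t,x)` with `t > 0`, `x > 0`. -/
theorem stmt_17 (a b : ℝ → ℝ → ℝ)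
    (ha : ∀ t x, a t x = 3 / 2 + t / (2 * Real.sqrt 3 * x))
    (hb : ∀ t x, b t x = (t ^ 2 - 3 * (1 + x ^ 2)) / (12 * Real.sqrt 3 * x ^ 2)) :
    ∀ t > (0 : ℝ), ∀ x > (0 : ℝ),
      deriv (fun s => x ^ 2 * a s x) t + deriv (fun y => y ^ 2 * b t y) x = 0 ∧
      deriv (fun s => x ^ 2 * b s x) t + deriv (fun y => y ^ 2 / 3 * a t y) x
        = 2 * x / 3 * a t x := by
  intro t _ x hx
  have solves : SolvesLinearizedRadialEulerAt a b t x :=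
    stmt_17_general (3 / 2) (1 / (2 * √3)) (-1 / (4 * √3))
      (fun s y => by rw [ha]; ring) (fun s y => by rw [hb]; ring) t hx.ne'
  exact ⟨solves.conservation, solves.balance⟩
end
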